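/- arXiv:2004.11635 — 3 statements merged into one kernel-verified Lean document; each statement's English description precedes it below -/
import Mathlib

section
/- Let d ≥ 1, let Γ ⊆ ℕ^{1+d} be an admissible graded subsemigroup, and let Φ : Γ → ℝ be superadditive and linearly bounded, i.e. there is C > 0 with |Φ(m,α)| ≤ C·m on Γ. Set θ = limsup_{n→∞} sup_{α ∈ Γ_n} Φ(n,α)/n. Then the graded pieces Γ_k are nonempty for all sufficiently large k, the probability measures μ_k = (#Γ_k)^{-1} Σ_{α ∈ Γ_k} δ_{Φ(k,α)/k} on ℝ converge weakly to a compactly supported probability measure μ, and for every real t < θ one has μ([t,∞)) = vol(Δ(Γ^{Φ,≥t})) / vol(Δ(Γ)). -/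
open scoped BigOperators
open Filter MeasureTheory
open scoped ENNReal NNReal

/-- Points of `ℕ^{1+d}`, written as a degree together with a vector in `ℕ^d`. -/
abbrev NPt (d : ℕ) := ℕ × (Fin d → ℕ)

/-- A subset of `ℕ^{1+d}` is a (graded) subsemigroup if it is closed under addition. -/
def IsGradedSubsemigroup {d : ℕ} (Γ : Set (NPt d)) : Prop :=
  ∀ x ∈ Γ, ∀ y ∈ Γ, x + y ∈ Γ

/-- Linear growth: there is `C > 0` with `|α|₁ ≤ C·m` for all `(m, α) ∈ Γ`. -/
def HasLinearGrowth {d : ℕ} (Γ : Set (NPt d)) : Prop :=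
  ∃ C : ℝ, 0 < C ∧ ∀ p ∈ Γ, (∑ i, (p.2 i : ℝ)) ≤ C * p.1

/-- The canonical embedding `ℕ^{1+d} → ℤ^{1+d}`. -/
def nptToInt {d : ℕ} (p : NPt d) : ℤ × (Fin d → ℤ) :=
  ((p.1 : ℤ), fun i => (p.2 i : ℤ))

/-- `Γ` generates `ℤ^{1+d}` as a group. -/
def GeneratesFullLattice {d : ℕ} (Γ : Set (NPt d)) : Prop :=
  AddSubgroup.closure (nptToInt '' Γ) = ⊤

/-- An admissible graded subsemigroup of `ℕ^{1+d}`. -/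
def IsAdmissible {d : ℕ} (Γ : Set (NPt d)) : Prop :=
  IsGradedSubsemigroup Γ ∧ HasLinearGrowth Γ ∧ GeneratesFullLattice Γ

/-- The canonical embedding `ℕ^{1+d} → ℝ^{1+d}`. -/
def nptToReal {d : ℕ} (p : NPt d) : ℝ × (Fin d → ℝ) :=
  ((p.1 : ℝ), fun i => (p.2 i : ℝ))

/-- The convex cone generated by a subset `S` of a real vector space: the set of finite
nonnegative linear combinations of elements of `S`. -/
def coneGen {E : Type*} [AddCommMonoid E] [Module ℝ E] (S : Set E) : Set E :=
  {y | ∃ (n : ℕ) (c : Fin n → ℝ) (p : Fin n → E),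
    (∀ i, 0 ≤ c i) ∧ (∀ i, p i ∈ S) ∧ y = ∑ i, c i • p i}

/-- The Okounkov body of a subset `Σ ⊆ ℕ^{1+d}`: the slice at height `1` of the closed convex
cone generated by `Σ` in `ℝ^{1+d}`. -/
def okounkovBody {d : ℕ} (S : Set (NPt d)) : Set (Fin d → ℝ) :=
  {x | ((1 : ℝ), x) ∈ closure (coneGen (nptToReal '' S))}

/-- The graded piece `Γ_m` of `Γ ⊆ ℕ^{1+d}`. -/
def gradedPiece {d : ℕ} (Γ : Set (NPt d)) (m : ℕ) : Set (Fin d → ℕ) :=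
  {α | (m, α) ∈ Γ}

/-- The superlevel semigroup `Γ^{Φ,≥t}` of a function `Φ` on `Γ`. -/
def superlevel {d : ℕ} (Γ : Set (NPt d)) (Φ : NPt d → ℝ) (t : ℝ) : Set (NPt d) :=
  {p ∈ Γ | p.1 * t ≤ Φ p}

/-- `θ = limsup_{n → ∞} sup_{α ∈ Γ_n} Φ(n,α)/n`. -/
noncomputable def thetaSup {d : ℕ} (Γ : Set (NPt d)) (Φ : NPt d → ℝ) : ℝ :=
  Filter.limsup (fun n : ℕ => sSup {r | ∃ α, (n, α) ∈ Γ ∧ r = Φ (n, α) / n}) Filter.atTop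


/-- The empirical measure `μ_k = (#Γ_k)⁻¹ Σ_{α ∈ Γ_k} δ_{Φ(k,α)/k}` on `ℝ`. -/
noncomputable def empiricalMeasure {d : ℕ} (Γ : Set (NPt d)) (Φ : NPt d → ℝ) (k : ℕ) :
    Measure ℝ :=
  (Nat.card {α : Fin d → ℕ // (k, α) ∈ Γ} : ℝ≥0∞)⁻¹ •
    Measure.sum (fun α : {α : Fin d → ℕ // (k, α) ∈ Γ} => Measure.dirac (Φ (k, α.1) / k))


lemma coneGen_eq_span {E : Type*} [AddCommMonoid E] [Module ℝ E] (S : Set E) :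
    coneGen S = (Submodule.span ℝ≥0 S : Set E) := by
  ext y
  simp only [SetLike.mem_coe, Submodule.mem_span_set', coneGen, Set.mem_ofPred_eq]
  constructor
  · rintro ⟨n, c, p, hc, hp, rfl⟩
    exact ⟨n, fun i => ⟨c i, hc i⟩, fun i => ⟨p i, hp i⟩, rfl⟩
  · rintro ⟨n, c, p, rfl⟩
    exact ⟨n, fun i => (c i : ℝ), fun i => (p i).1, fun i => (c i).2, fun i => (p i).2, rfl⟩

/-- The cone as a submodule over the nonnegative reals. -/
noncomputable def rcone {d : ℕ} (S : Set (NPt d)) : Submodule ℝ≥0 (ℝ × (Fin d → ℝ)) :=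
  Submodule.span ℝ≥0 (nptToReal '' S)

/-- The height-one slice of the non-closed cone. -/
def oslice {d : ℕ} (S : Set (NPt d)) : Set (Fin d → ℝ) :=
  {x | ((1 : ℝ), x) ∈ rcone S}

lemma rcone_smul {d : ℕ} (S : Set (NPt d)) {c : ℝ} (hc : 0 ≤ c) {x : ℝ × (Fin d → ℝ)}
    (hx : x ∈ rcone S) : c • x ∈ rcone S :=
  (rcone S).smul_mem (⟨c, hc⟩ : ℝ≥0) hx

lemma rcone_convex {d : ℕ} (S : Set (NPt d)) : Convex ℝ (rcone S : Set (ℝ × (Fin d → ℝ))) := by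
  intro x hx y hy a b ha hb _
  exact (rcone S).add_mem (rcone_smul S ha hx) (rcone_smul S hb hy)

lemma oslice_convex {d : ℕ} (S : Set (NPt d)) : Convex ℝ (oslice S) := by
  intro x hx y hy a b ha hb hab
  have := rcone_convex S hx hy ha hb hab
  have h2 : ((1 : ℝ), a • x + b • y) = a • ((1 : ℝ), x) + b • ((1 : ℝ), y) := by
    ext <;> simp [hab]
  change ((1 : ℝ), a • x + b • y) ∈ rcone S
  rw [h2]
  exact this

lemma rcone_mono {d : ℕ} {S T : Set (NPt d)} (h : S ⊆ T) : rcone S ≤ rcone T :=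
  Submodule.span_mono (Set.image_mono h)

lemma oslice_mono {d : ℕ} {S T : Set (NPt d)} (h : S ⊆ T) : oslice S ⊆ oslice T :=
  fun _ hx => rcone_mono h hx

lemma okounkovBody_mono {d : ℕ} {S T : Set (NPt d)} (h : S ⊆ T) :
    okounkovBody S ⊆ okounkovBody T := by
  intro x hx
  simp only [okounkovBody, coneGen_eq_span, Set.mem_ofPred_eq] at hx ⊢
  exact closure_mono (rcone_mono h) hx

lemma okounkovBody_eq {d : ℕ} (S : Set (NPt d)) :
    okounkovBody S = closure (oslice S) := by
  apply Set.Subset.antisymm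
  · intro x hx
    simp only [okounkovBody, coneGen_eq_span, Set.mem_ofPred_eq] at hx
    rw [mem_closure_iff_seq_limit] at hx ⊢
    obtain ⟨u, hu, hlim⟩ := hx
    have h1 : Tendsto (fun n => (u n).1) atTop (nhds 1) := (continuous_fst.tendsto _).comp hlim
    have h2 : Tendsto (fun n => (u n).2) atTop (nhds x) := (continuous_snd.tendsto _).comp hlim
    have h3 : Tendsto (fun n => (u n).1⁻¹ • (u n).2) atTop (nhds x) := by
      simpa using (h1.inv₀ one_ne_zero).smul h2
    have h4 : ∀ᶠ n in atTop, 0 < (u n).1 := h1.eventually (lt_mem_nhds one_pos)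
    obtain ⟨N, hN⟩ := eventually_atTop.1 h4
    refine ⟨fun n => (u (n + N)).1⁻¹ • (u (n + N)).2, fun n => ?_,
      (tendsto_add_atTop_iff_nat N).2 h3⟩
    have hp := hN (n + N) (by omega)
    have := rcone_smul S (inv_nonneg.2 hp.le) (hu (n + N))
    simp only [oslice, Set.mem_ofPred_eq]
    convert this using 1
    ext
    · simp [hp.ne']
    · simp
  · have hcl : IsClosed (okounkovBody S) := by
      unfold okounkovBody
      exact isClosed_closure.preimage (by fun_prop : Continuous fun x : Fin d → ℝ => ((1 : ℝ), x))
    refine hcl.closure_subset_iff.2 fun x hx => ?_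
    simp only [okounkovBody, coneGen_eq_span, Set.mem_ofPred_eq]
    exact subset_closure hx

lemma rcone_bound {d : ℕ} {S : Set (NPt d)} {C : ℝ}
    (hS : ∀ p ∈ S, (∑ i, (p.2 i : ℝ)) ≤ C * p.1) {x : ℝ × (Fin d → ℝ)} (hx : x ∈ rcone S) :
    0 ≤ x.1 ∧ (∀ i, 0 ≤ x.2 i) ∧ ∑ i, x.2 i ≤ C * x.1 := by
  induction hx using Submodule.span_induction with
  | mem x h =>
    obtain ⟨p, hp, rfl⟩ := h
    exact ⟨by simp [nptToReal], by simp [nptToReal], hS p hp⟩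
  | zero => simp
  | add x y _ _ hx hy =>
    refine ⟨add_nonneg hx.1 hy.1, fun i => add_nonneg (hx.2.1 i) (hy.2.1 i), ?_⟩
    simp only [Prod.snd_add, Pi.add_apply, Finset.sum_add_distrib, Prod.fst_add, mul_add]
    linarith [hx.2.2, hy.2.2]
  | smul a x _ hx =>
    refine ⟨mul_nonneg a.2 hx.1, fun i => mul_nonneg a.2 (hx.2.1 i), ?_⟩
    have h1 : ∑ i, (a • x).2 i = (a : ℝ) * ∑ i, x.2 i := by
      rw [Finset.mul_sum]; rfl
    have h2 : (a • x).1 = (a : ℝ) * x.1 := rfl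
    rw [h1, h2]
    nlinarith [mul_le_mul_of_nonneg_left hx.2.2 a.2]

lemma oslice_bounded {d : ℕ} {S : Set (NPt d)} (hS : HasLinearGrowth S) :
    Bornology.IsBounded (oslice S) := by
  obtain ⟨C, hC, h⟩ := hS
  refine (Metric.isBounded_Icc (0 : Fin d → ℝ) (fun _ => C)).subset fun x hx => ?_
  have := rcone_bound h hx
  refine ⟨fun i => this.2.1 i, fun i => ?_⟩
  have h2 := Finset.single_le_sum (f := x) (fun i _ => this.2.1 i) (Finset.mem_univ i)
  have h3 := this.2.2
  simp only [mul_one] at h3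
  linarith

lemma volume_okounkovBody {d : ℕ} (S : Set (NPt d)) :
    volume (okounkovBody S) = volume (oslice S) := by
  rw [okounkovBody_eq]
  exact measure_congr (closure_ae_eq_of_null_frontier ((oslice_convex S).addHaar_frontier _))

lemma volume_interior_oslice {d : ℕ} (S : Set (NPt d)) :
    volume (interior (oslice S)) = volume (oslice S) :=
  measure_congr (interior_ae_eq_of_null_frontier ((oslice_convex S).addHaar_frontier _))

lemma volume_oslice_ne_top {d : ℕ} {S : Set (NPt d)} (hS : HasLinearGrowth S) :
    volume (oslice S) ≠ ⊤ := (oslice_bounded hS).measure_lt_top.ne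

/-- integer points of the dilate -/
def zpts {d : ℕ} (s : Set (Fin d → ℝ)) (k : ℕ) : Set (Fin d → ℤ) :=
  {α | (fun i => (α i : ℝ) / k) ∈ s}

lemma zpts_finite {d : ℕ} {s : Set (Fin d → ℝ)} (hs : Bornology.IsBounded s) {k : ℕ}
    (hk : 0 < k) : (zpts s k).Finite := by
  obtain ⟨R, hR⟩ := hs.subset_closedBall 0
  refine (Set.finite_Icc (fun _ : Fin d => -⌈R * k⌉) (fun _ => ⌈R * k⌉)).subset fun α hα => ?_
  have h1 := hR hα
  rw [mem_closedBall_zero_iff] at h1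
  have hk' : (0 : ℝ) < k := by exact_mod_cast hk
  have h2 : ∀ i, |(α i : ℝ)| ≤ R * k := fun i => by
    have := (norm_le_pi_norm _ i).trans h1
    rw [Real.norm_eq_abs, abs_div, abs_of_pos hk', div_le_iff₀ hk'] at this
    exact this
  refine ⟨fun i => ?_, fun i => ?_⟩
  · have := (abs_le.1 (h2 i)).1
    have h3 := Int.le_ceil (R * k)
    have : ((-⌈R * k⌉ : ℤ) : ℝ) ≤ α i := by push_cast; linarith
    exact_mod_cast this
  · have := (abs_le.1 (h2 i)).2
    have h3 := Int.le_ceil (R * k)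
    have : (α i : ℝ) ≤ ((⌈R * k⌉ : ℤ) : ℝ) := by linarith
    exact_mod_cast this

open scoped Pointwise in
lemma zpts_tendsto {d : ℕ} {s : Set (Fin d → ℝ)} (hs : Bornology.IsBounded s)
    (hm : MeasurableSet s) (hf : volume (frontier s) = 0) :
    Tendsto (fun k : ℕ => (Nat.card (zpts s k) : ℝ) / (k : ℝ) ^ d) atTop
      (nhds (volume.real s)) := by
  have h := tendsto_card_div_pow_atTop_volume s hs hm hf
  rw [Fintype.card_fin] at h
  refine h.congr' ?_
  filter_upwards [eventually_gt_atTop 0] with k hk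
  have : NeZero k := ⟨hk.ne'⟩
  have hk' : (k : ℝ) ≠ 0 := by exact_mod_cast hk.ne'
  congr 2
  symm
  refine Nat.card_congr (Equiv.ofBijective
    (fun α => ⟨fun i => (α.1 i : ℝ) / k, α.2, ?_⟩) ⟨?_, ?_⟩)
  · have : (fun i => (α.1 i : ℝ) / k) ∈ (k : ℝ)⁻¹ • Submodule.span ℤ (Set.range (Pi.basisFun ℝ (Fin d))) := by
      rw [BoxIntegral.unitPartition.mem_smul_span_iff]
      exact fun i => ⟨α.1 i, by simp; field_simp⟩
    exact this
  · intro α β hab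
    ext i
    have := congrFun (congrArg Subtype.val hab) i
    simp only at this
    have h2 := (div_left_inj' hk').1 this
    exact_mod_cast h2
  · rintro ⟨x, hx, hx'⟩
    have hx'' : x ∈ (k : ℝ)⁻¹ • Submodule.span ℤ (Set.range (Pi.basisFun ℝ (Fin d))) := hx'
    rw [BoxIntegral.unitPartition.mem_smul_span_iff] at hx''
    choose a ha using hx''
    have hxa : (fun i => (a i : ℝ) / k) = x := by
      ext i
      have := ha i
      simp only [eq_intCast] at this
      rw [this]; field_simp
    exact ⟨⟨a, by simp only [zpts, Set.mem_ofPred_eq, hxa]; exact hx⟩, by ext1; exact hxa⟩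

/-- `nptToInt` as an additive homomorphism. -/
def nI {d : ℕ} : NPt d →+ ℤ × (Fin d → ℤ) where
  toFun := nptToInt
  map_zero' := by ext <;> simp [nptToInt]
  map_add' x y := by ext <;> simp [nptToInt]

/-- `nptToReal` as an additive homomorphism. -/
def nR {d : ℕ} : NPt d →+ ℝ × (Fin d → ℝ) where
  toFun := nptToReal
  map_zero' := by ext <;> simp [nptToReal]
  map_add' x y := by ext <;> simp [nptToReal]

/-- The embedding of the integer lattice. -/
def zR {d : ℕ} : ℤ × (Fin d → ℤ) →+ ℝ × (Fin d → ℝ) where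
  toFun z := ((z.1 : ℝ), fun i => (z.2 i : ℝ))
  map_zero' := by ext <;> simp
  map_add' x y := by ext <;> simp

lemma zR_nI {d : ℕ} (p : NPt d) : zR (nI p) = nptToReal p := by
  ext <;> simp [zR, nI, nptToInt, nptToReal]

lemma zR_le {d : ℕ} {x y : ℤ × (Fin d → ℤ)} (h : zR x ≤ zR y) : x ≤ y := by
  refine ⟨?_, fun i => ?_⟩
  · have := h.1
    simpa [zR] using this
  · have := h.2 i
    simpa [zR] using this

lemma nptToReal_nonneg {d : ℕ} (p : NPt d) : 0 ≤ nptToReal p := by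
  refine ⟨by simp [nptToReal], fun i => by simp [nptToReal]⟩

lemma nsmul_mem_semigroup {d : ℕ} {Γ : Set (NPt d)} (hΓ : IsGradedSubsemigroup Γ) {p : NPt d}
    (hp : p ∈ Γ) (n : ℕ) : (n + 1) • p ∈ Γ := by
  induction n with
  | zero => simpa using hp
  | succ n ih => rw [succ_nsmul]; exact hΓ _ ih _ hp

lemma semigroup_conductor {d : ℕ} {Γ : Set (NPt d)} (hΓ : IsGradedSubsemigroup Γ) (S : Finset (NPt d))
    (hS : (S : Set (NPt d)) ⊆ Γ) (hne : S.Nonempty)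
    (hgen : Submodule.span ℤ (nI '' (S : Set (NPt d))) = ⊤) :
    ∃ γ₀ : NPt d, ∀ z : ℤ × (Fin d → ℤ), zR z ∈ rcone (S : Set (NPt d)) →
      ∃ p ∈ Γ, nI p = z + nI γ₀ := by
  classical
  have hn : ∀ r : ℤ × (Fin d → ℤ), ∃ c : NPt d → ℤ, ∑ s ∈ S, c s • nI s = r := fun r =>
    Submodule.mem_span_image_finset_iff_exists_fun' ℤ |>.1 (hgen ▸ Submodule.mem_top)
  choose n hn using hn
  set B : ℤ × (Fin d → ℤ) := ∑ s ∈ S, nI s with hB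
  set N : ℕ := ∑ r ∈ Finset.Icc 0 B, ∑ s ∈ S, (n r s).natAbs with hN
  have hNle : ∀ r ∈ Finset.Icc 0 B, ∀ s ∈ S, 0 ≤ n r s + N := by
    intro r hr s hs
    have h1 : (n r s).natAbs ≤ N :=
      (Finset.single_le_sum (f := fun s => (n r s).natAbs) (fun _ _ => Nat.zero_le _) hs).trans
        (Finset.single_le_sum (f := fun r => ∑ s ∈ S, (n r s).natAbs)
          (fun _ _ => Nat.zero_le _) hr)
    omega
  refine ⟨∑ s ∈ S, (N + 1) • s, fun z hz => ?_⟩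
  obtain ⟨c, hc⟩ := (Submodule.mem_span_image_finset_iff_exists_fun' ℝ≥0).1 hz
  set r : ℤ × (Fin d → ℤ) := z - ∑ s ∈ S, ⌊c s⌋₊ • nI s with hr
  have hzr : zR r = ∑ s ∈ S, ((c s : ℝ) - ⌊c s⌋₊) • nptToReal s := by
    rw [hr, map_sub, map_sum, ← hc, ← Finset.sum_sub_distrib]
    refine Finset.sum_congr rfl fun s _ => ?_
    rw [map_nsmul, zR_nI, sub_smul, Nat.cast_smul_eq_nsmul]
    rfl
  have hfl : ∀ s, 0 ≤ (c s : ℝ) - ⌊c s⌋₊ ∧ (c s : ℝ) - ⌊c s⌋₊ ≤ 1 := fun s => by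
    have h1 : ((⌊c s⌋₊ : ℝ≥0) : ℝ) ≤ c s := NNReal.coe_le_coe.2 (Nat.floor_le (c s).2)
    have h2 : (c s : ℝ) < ((⌊c s⌋₊ + 1 : ℝ≥0) : ℝ) := NNReal.coe_lt_coe.2 (Nat.lt_floor_add_one (c s))
    push_cast at h1 h2
    constructor <;> linarith
  have hrI : r ∈ Finset.Icc 0 B := by
    rw [Finset.mem_Icc]
    constructor
    · apply zR_le
      rw [map_zero, hzr]
      exact Finset.sum_nonneg fun s _ => smul_nonneg (hfl s).1 (nptToReal_nonneg s)
    · apply zR_le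
      rw [hzr, hB, map_sum]
      refine Finset.sum_le_sum fun s _ => ?_
      rw [zR_nI]
      exact smul_le_of_le_one_left (nptToReal_nonneg s) (hfl s).2
  refine ⟨∑ s ∈ S, ((⌊c s⌋₊ + (n r s + N).toNat) + 1) • s, ?_, ?_⟩
  · exact Finset.sum_induction_nonempty _ (· ∈ Γ) (fun a b ha hb => hΓ a ha b hb) hne
      fun s hs => nsmul_mem_semigroup hΓ (hS hs) _
  · have hz' : z = ∑ s ∈ S, n r s • nI s + ∑ s ∈ S, ⌊c s⌋₊ • nI s := by
      rw [hn r, hr]; abel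
    rw [hz', map_sum, map_sum, ← Finset.sum_add_distrib, ← Finset.sum_add_distrib]
    refine Finset.sum_congr rfl fun s hs => ?_
    rw [map_nsmul, map_nsmul]
    have h3 := hNle r hrI s hs
    simp only [← natCast_zsmul]
    rw [← add_smul, ← add_smul]
    congr 1
    push_cast
    rw [Int.toNat_of_nonneg h3]
    ring

lemma generates_iff {d : ℕ} (Γ : Set (NPt d)) :
    GeneratesFullLattice Γ ↔ Submodule.span ℤ (nI '' Γ) = ⊤ := by
  unfold GeneratesFullLattice
  rw [← Submodule.span_int_eq_addSubgroupClosure]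
  change (Submodule.span ℤ (nI '' Γ)).toAddSubgroup = ⊤ ↔ _
  rw [← Submodule.top_toAddSubgroup (R := ℤ), Submodule.toAddSubgroup_inj]

/-- Elements of degree at most `n`. -/
def trunc {d : ℕ} (Γ : Set (NPt d)) (n : ℕ) : Set (NPt d) := {p ∈ Γ | p.1 ≤ n}

lemma trunc_mono {d : ℕ} (Γ : Set (NPt d)) : Monotone (trunc Γ) :=
  fun _ _ h _ hp => ⟨hp.1, hp.2.trans h⟩

lemma trunc_subset {d : ℕ} (Γ : Set (NPt d)) (n : ℕ) : trunc Γ n ⊆ Γ := fun _ hp => hp.1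

lemma growth_coord {d : ℕ} {Γ : Set (NPt d)} {C : ℝ}
    (h : ∀ p ∈ Γ, (∑ i, (p.2 i : ℝ)) ≤ C * p.1) {p : NPt d} (hp : p ∈ Γ) (i : Fin d) :
    (p.2 i : ℝ) ≤ C * p.1 :=
  (Finset.single_le_sum (f := fun i => (p.2 i : ℝ)) (fun _ _ => Nat.cast_nonneg _)
    (Finset.mem_univ i)).trans (h p hp)

lemma trunc_finite {d : ℕ} {Γ : Set (NPt d)} (hΓ : HasLinearGrowth Γ) (n : ℕ) :
    (trunc Γ n).Finite := by
  classical
  obtain ⟨C, hC, h⟩ := hΓ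
  refine (Set.finite_Icc (0 : NPt d) (n, fun _ => ⌊C * n⌋₊)).subset fun p hp =>
    ⟨zero_le, hp.2, fun i => ?_⟩
  apply Nat.le_floor
  have h1 := growth_coord h hp.1 i
  have h2 : (p.1 : ℝ) ≤ n := by exact_mod_cast hp.2
  nlinarith

lemma gradedPiece_finite {d : ℕ} {Γ : Set (NPt d)} (hΓ : HasLinearGrowth Γ) (k : ℕ) :
    (gradedPiece Γ k).Finite := by
  refine ((trunc_finite hΓ k).image Prod.snd).subset fun α hα => ?_
  exact ⟨(k, α), ⟨hα, le_rfl⟩, rfl⟩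

lemma trunc_generates {d : ℕ} {Γ : Set (NPt d)} (hΓ : GeneratesFullLattice Γ) :
    ∃ n₀, ∀ n ≥ n₀, Submodule.span ℤ (nI '' trunc Γ n) = ⊤ := by
  rw [generates_iff] at hΓ
  have hfg : (Submodule.span ℤ (nI '' Γ)).FG := IsNoetherian.noetherian _
  obtain ⟨s', hs', hsp⟩ := (Submodule.fg_span_iff_fg_span_finset_subset _).1 hfg
  refine ⟨s'.sup (fun z => z.1.toNat), fun n hn => ?_⟩
  rw [eq_top_iff, ← hΓ, hsp]
  apply Submodule.span_mono
  intro z hz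
  obtain ⟨p, hp, rfl⟩ := hs' hz
  refine ⟨p, ⟨hp, ?_⟩, rfl⟩
  have h1 := Finset.le_sup (f := fun z : ℤ × (Fin d → ℤ) => z.1.toNat) hz
  have h2 : (nI p).1.toNat = p.1 := by simp [nI, nptToInt]
  simp only [h2] at h1
  omega

lemma oslice_iUnion {d : ℕ} (Γ : Set (NPt d)) : (⋃ n, oslice (trunc Γ n)) = oslice Γ := by
  apply Set.Subset.antisymm
  · exact Set.iUnion_subset fun n => oslice_mono (trunc_subset Γ n)
  · intro x hx
    have hx' : ((1 : ℝ), x) ∈ rcone Γ := hx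
    unfold rcone at hx'
    rw [Submodule.mem_span_set'] at hx'
    obtain ⟨n, c, p, hp⟩ := hx'
    choose q hq hqp using fun i => (p i).2
    refine Set.mem_iUnion.2 ⟨Finset.univ.sup fun i => (q i).1, ?_⟩
    change ((1 : ℝ), x) ∈ rcone _
    rw [← hp]
    refine Submodule.sum_mem _ fun i _ => Submodule.smul_mem _ _ (Submodule.subset_span ?_)
    exact ⟨q i, ⟨hq i, Finset.le_sup (f := fun i => (q i).1) (Finset.mem_univ i)⟩, hqp i⟩

lemma volume_oslice_pos {d : ℕ} {Γ : Set (NPt d)} (hg : HasLinearGrowth Γ)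
    (hΓ : GeneratesFullLattice Γ) : 0 < volume (oslice Γ) := by
  have hspan : Submodule.span ℝ (nptToReal '' Γ) = ⊤ := by
    have h1 : ∀ z, zR z ∈ Submodule.span ℝ (nptToReal '' Γ) := by
      intro z
      have h2 : AddSubgroup.closure (nptToInt '' Γ) ≤
          (Submodule.span ℝ (nptToReal '' Γ)).toAddSubgroup.comap zR := by
        rw [AddSubgroup.closure_le]
        rintro _ ⟨p, hp, rfl⟩
        change zR (nI p) ∈ Submodule.span ℝ (nptToReal '' Γ)
        rw [zR_nI]
        exact Submodule.subset_span ⟨p, hp, rfl⟩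
      unfold GeneratesFullLattice at hΓ
      rw [hΓ] at h2
      exact h2 (AddSubgroup.mem_top z)
    rw [eq_top_iff]
    rintro ⟨h, x⟩ -
    have h3 : ((h, x) : ℝ × (Fin d → ℝ)) = h • zR (1, 0) + ∑ i, x i • zR (0, Pi.single i 1) := by
      ext j
      · simp [zR, Prod.fst_sum]
      · simp [zR, Prod.snd_sum, Finset.sum_apply, Pi.single_apply]
    rw [h3]
    exact Submodule.add_mem _ (Submodule.smul_mem _ _ (h1 _))
      (Submodule.sum_mem _ fun i _ => Submodule.smul_mem _ _ (h1 _))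
  have haff : affineSpan ℝ (rcone Γ : Set (ℝ × (Fin d → ℝ))) = ⊤ := by
    have h0 : insert 0 (rcone Γ : Set (ℝ × (Fin d → ℝ))) = rcone Γ :=
      Set.insert_eq_of_mem (rcone Γ).zero_mem
    have h1 := affineSpan_insert_zero (k := ℝ) (rcone Γ : Set (ℝ × (Fin d → ℝ)))
    rw [h0] at h1
    have h2 : Submodule.span ℝ (rcone Γ : Set (ℝ × (Fin d → ℝ))) = ⊤ := by
      rw [eq_top_iff, ← hspan]
      exact Submodule.span_mono Submodule.subset_span
    rw [h2] at h1
    exact SetLike.coe_injective (by simpa using h1)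
  obtain ⟨⟨h, x⟩, hx⟩ := (rcone_convex Γ).interior_nonempty_iff_affineSpan_eq_top.2 haff
  obtain ⟨C, hC, hgr⟩ := hg
  have hh : 0 ≤ h := (rcone_bound hgr (interior_subset hx)).1
  have hU : IsOpen ((fun t : ℝ => (h + t, x)) ⁻¹'
      interior (rcone Γ : Set (ℝ × (Fin d → ℝ)))) :=
    isOpen_interior.preimage (by fun_prop)
  obtain ⟨ε, hε, hball⟩ := Metric.isOpen_iff.1 hU 0 (by simpa using hx)
  have hx' : (h + ε / 2, x) ∈ interior (rcone Γ : Set (ℝ × (Fin d → ℝ))) :=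
    hball (by simp [abs_of_pos hε]; linarith)
  have hpos : 0 < h + ε / 2 := by positivity
  set h' := h + ε / 2
  have hV : IsOpen ((fun y : Fin d → ℝ => (h', h' • y)) ⁻¹'
      interior (rcone Γ : Set (ℝ × (Fin d → ℝ)))) :=
    isOpen_interior.preimage (by fun_prop)
  refine (hV.measure_pos volume ⟨h'⁻¹ • x, ?_⟩).trans_le (measure_mono fun y hy => ?_)
  · simpa [smul_smul, hpos.ne'] using hx'
  · have h1 := rcone_smul Γ (inv_nonneg.2 hpos.le) (interior_subset hy)
    have h2 : h'⁻¹ • (h', h' • y) = ((1 : ℝ), y) := by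
      ext <;> simp [hpos.ne']
    change ((1 : ℝ), y) ∈ rcone Γ
    rw [← h2]
    exact h1

lemma card_le_upper {d : ℕ} {Γ : Set (NPt d)} (hg : HasLinearGrowth Γ) {k : ℕ} (hk : 0 < k) :
    Nat.card (gradedPiece Γ k) ≤ Nat.card (zpts (closure (oslice Γ)) k) := by
  have : Finite (zpts (closure (oslice Γ)) k) :=
    (zpts_finite (oslice_bounded hg).closure hk).to_subtype
  have hk' : (0 : ℝ) < k := by exact_mod_cast hk
  refine Nat.card_le_card_of_injective
    (fun α : gradedPiece Γ k => (⟨fun i => (α.1 i : ℤ), ?_⟩ : zpts (closure (oslice Γ)) k)) ?_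
  · apply subset_closure
    have h1 : nptToReal (k, α.1) ∈ rcone Γ := Submodule.subset_span ⟨_, α.2, rfl⟩
    have h2 := rcone_smul Γ (inv_nonneg.2 hk'.le) h1
    change ((1 : ℝ), _) ∈ rcone Γ
    convert! h2 using 1
    ext
    · simp [nptToReal, hk'.ne']
    · simp [nptToReal]; ring
  · intro α β hab
    ext i
    have := congrFun (congrArg Subtype.val hab) i
    simpa using this

lemma card_ge_lower {d : ℕ} {Γ : Set (NPt d)} (hΓ : IsAdmissible Γ) (n : ℕ)
    (hn : Submodule.span ℤ (nI '' trunc Γ n) = ⊤) :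
    ∃ m₀ : ℕ, ∀ j : ℕ, 0 < j →
      Nat.card (zpts (interior (oslice (trunc Γ n))) j) ≤ Nat.card (gradedPiece Γ (j + m₀)) := by
  obtain ⟨hs, hg, -⟩ := hΓ
  set S := (trunc_finite hg n).toFinset with hS
  have hSc : (S : Set (NPt d)) = trunc Γ n := by simp [hS]
  have hne : S.Nonempty := by
    by_contra h
    rw [Finset.not_nonempty_iff_eq_empty] at h
    rw [← hSc, h] at hn
    simp only [Finset.coe_empty, Set.image_empty, Submodule.span_empty] at hn
    have h1 : ((1, 0) : ℤ × (Fin d → ℤ)) ∈ (⊥ : Submodule ℤ (ℤ × (Fin d → ℤ))) :=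
      hn ▸ Submodule.mem_top
    simp at h1
  obtain ⟨γ, hγ⟩ := semigroup_conductor hs S (by rw [hSc]; exact trunc_subset Γ n) hne
    (by rw [hSc]; exact hn)
  refine ⟨γ.1, fun j hj => ?_⟩
  have hj' : (0 : ℝ) < j := by exact_mod_cast hj
  have : Finite (gradedPiece Γ (j + γ.1)) := (gradedPiece_finite hg _).to_subtype
  have key : ∀ α : zpts (interior (oslice (trunc Γ n))) j,
      ∃ β : Fin d → ℕ, (j + γ.1, β) ∈ Γ ∧ ∀ i, (β i : ℤ) = α.1 i + γ.2 i := by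
    intro α
    have h1 : ((1 : ℝ), fun i => (α.1 i : ℝ) / j) ∈ rcone (trunc Γ n) :=
      interior_subset (s := oslice (trunc Γ n)) α.2
    have h2 := rcone_smul _ hj'.le h1
    obtain ⟨p, hp, hpz⟩ := hγ ((j : ℤ), α.1) (by
      rw [hSc]
      convert! h2 using 1
      ext
      · simp [zR]
      · simp [zR]; field_simp)
    refine ⟨p.2, ?_, fun i => ?_⟩
    · have h3 := congrArg Prod.fst hpz
      simp only [nI, nptToInt, AddMonoidHom.coe_mk, ZeroHom.coe_mk, Prod.fst_add] at h3
      have h4 : p.1 = j + γ.1 := by exact_mod_cast h3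
      rw [← h4]; exact hp
    · have h3 := congrFun (congrArg Prod.snd hpz) i
      simpa [nI, nptToInt] using h3
  choose β hβ hβα using key
  refine Nat.card_le_card_of_injective
    (fun α => (⟨β α, hβ α⟩ : gradedPiece Γ (j + γ.1))) ?_
  intro α α' h
  have h1 : β α = β α' := congrArg Subtype.val h
  ext i
  have h2 := hβα α i
  have h3 := hβα α' i
  rw [h1] at h2
  omega

lemma card_tendsto {d : ℕ} {Γ : Set (NPt d)} (hΓ : IsAdmissible Γ) :
    Tendsto (fun k : ℕ => (Nat.card (gradedPiece Γ k) : ℝ) / (k : ℝ) ^ d) atTop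
      (nhds (volume.real (okounkovBody Γ))) := by
  have hg := hΓ.2.1
  rw [tendsto_order]
  constructor
  · intro a ha
    obtain ⟨n₀, hn₀⟩ := trunc_generates hΓ.2.2
    have hlim : Tendsto (fun n => volume.real (oslice (trunc Γ n))) atTop
        (nhds (volume.real (okounkovBody Γ))) := by
      have h1 := tendsto_measure_iUnion_atTop (μ := volume)
        (fun a b h => oslice_mono (trunc_mono Γ h) : Monotone fun n => oslice (trunc Γ n))
      rw [oslice_iUnion] at h1
      rw [measureReal_def, volume_okounkovBody]
      exact (ENNReal.tendsto_toReal (volume_oslice_ne_top hg)).comp h1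
    obtain ⟨n, han, hn⟩ := ((hlim.eventually (lt_mem_nhds ha)).and
      (eventually_ge_atTop n₀)).exists
    obtain ⟨m₀, hm₀⟩ := card_ge_lower hΓ n (hn₀ n hn)
    have hgt : HasLinearGrowth (trunc Γ n) := by
      obtain ⟨C, hC, h⟩ := hg
      exact ⟨C, hC, fun p hp => h p hp.1⟩
    have hz := zpts_tendsto ((oslice_bounded hgt).subset interior_subset)
      isOpen_interior.measurableSet ((oslice_convex (trunc Γ n)).interior.addHaar_frontier volume)
    rw [measureReal_def, volume_interior_oslice, ← measureReal_def] at hz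
    have hq := (tendsto_natCast_div_add_atTop (m₀ : ℝ)).pow d
    have hzq := hz.mul hq
    rw [one_pow, mul_one] at hzq
    obtain ⟨J, hJ⟩ := eventually_atTop.1 (hzq.eventually (lt_mem_nhds han))
    refine eventually_atTop.2 ⟨J + 1 + m₀, fun k hk => ?_⟩
    obtain ⟨j, rfl⟩ : ∃ j, k = j + m₀ := ⟨k - m₀, by omega⟩
    have hj : 0 < j := by omega
    have hj' : (0 : ℝ) < j := by exact_mod_cast hj
    refine (hJ j (by omega)).trans_le ?_
    have h5 : (Nat.card (zpts (interior (oslice (trunc Γ n))) j) : ℝ) ≤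
      Nat.card (gradedPiece Γ (j + m₀)) := by exact_mod_cast hm₀ j hj
    rw [div_pow, div_mul_div_cancel₀ (by positivity)]
    push_cast
    gcongr
  · intro a ha
    have hz := zpts_tendsto (oslice_bounded hg).closure isClosed_closure.measurableSet
      ((oslice_convex Γ).closure.addHaar_frontier volume)
    rw [← okounkovBody_eq] at hz
    filter_upwards [hz.eventually (gt_mem_nhds ha), eventually_gt_atTop 0] with k hk hk0
    refine lt_of_le_of_lt ?_ hk
    rw [okounkovBody_eq]
    gcongr
    exact card_le_upper hg hk0

lemma volume_okounkovBody_real_pos {d : ℕ} {Γ : Set (NPt d)} (hΓ : IsAdmissible Γ) :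
    0 < volume.real (okounkovBody Γ) := by
  rw [measureReal_def, volume_okounkovBody]
  exact ENNReal.toReal_pos (volume_oslice_pos hΓ.2.1 hΓ.2.2).ne' (volume_oslice_ne_top hΓ.2.1)

lemma volume_okounkovBody_ne_top {d : ℕ} {Γ : Set (NPt d)} (hΓ : HasLinearGrowth Γ) :
    volume (okounkovBody Γ) ≠ ⊤ := by
  rw [volume_okounkovBody]
  exact volume_oslice_ne_top hΓ

lemma gradedPiece_eventually {d : ℕ} {Γ : Set (NPt d)} (hΓ : IsAdmissible Γ) :
    ∃ K₀ : ℕ, ∀ k : ℕ, K₀ ≤ k → (gradedPiece Γ k).Nonempty := by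
  obtain ⟨K, hK⟩ := eventually_atTop.1
    ((card_tendsto hΓ).eventually (lt_mem_nhds (volume_okounkovBody_real_pos hΓ)))
  refine ⟨K, fun k hk => ?_⟩
  by_contra h
  rw [Set.not_nonempty_iff_eq_empty] at h
  have := hK k hk
  rw [h] at this
  simp at this

lemma super_add_nsmul {d : ℕ} {Γ : Set (NPt d)} (hs : IsGradedSubsemigroup Γ) {Φ : NPt d → ℝ}
    (hsuper : ∀ x ∈ Γ, ∀ y ∈ Γ, Φ x + Φ y ≤ Φ (x + y)) {p q : NPt d} (hp : p ∈ Γ) (hq : q ∈ Γ)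
    (N : ℕ) : p + N • q ∈ Γ ∧ Φ p + N * Φ q ≤ Φ (p + N • q) := by
  induction N with
  | zero => simpa using hp
  | succ N ih =>
    rw [succ_nsmul, ← add_assoc]
    refine ⟨hs _ ih.1 _ hq, ?_⟩
    have := hsuper _ ih.1 _ hq
    push_cast
    linarith [ih.2]

lemma ratio_bound {d : ℕ} {Γ : Set (NPt d)} {Φ : NPt d → ℝ} {C : ℝ} (hC : 0 < C)
    (h : ∀ p ∈ Γ, |Φ p| ≤ C * p.1) {p : NPt d} (hp : p ∈ Γ) : |Φ p / p.1| ≤ C := by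
  rcases Nat.eq_zero_or_pos p.1 with h0 | h0
  · simp [h0, hC.le]
  · have h0' : (0 : ℝ) < p.1 := by exact_mod_cast h0
    rw [abs_div, abs_of_pos h0', div_le_iff₀ h0']
    exact h p hp

lemma sup_bound {d : ℕ} {Γ : Set (NPt d)} {Φ : NPt d → ℝ} {C : ℝ} (hC : 0 < C)
    (h : ∀ p ∈ Γ, |Φ p| ≤ C * p.1) (n : ℕ) :
    sSup {r | ∃ α, (n, α) ∈ Γ ∧ r = Φ (n, α) / n} ≤ C ∧
    -C ≤ sSup {r | ∃ α, (n, α) ∈ Γ ∧ r = Φ (n, α) / n} ∧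
    BddAbove {r | ∃ α, (n, α) ∈ Γ ∧ r = Φ (n, α) / n} := by
  have hb : ∀ r ∈ {r | ∃ α, (n, α) ∈ Γ ∧ r = Φ (n, α) / n}, -C ≤ r ∧ r ≤ C := by
    rintro r ⟨α, hα, rfl⟩
    exact abs_le.1 (ratio_bound hC h hα)
  have hbdd : BddAbove {r | ∃ α, (n, α) ∈ Γ ∧ r = Φ (n, α) / n} := ⟨C, fun r hr => (hb r hr).2⟩
  refine ⟨Real.sSup_le (fun r hr => (hb r hr).2) hC.le, ?_, hbdd⟩
  rcases Set.eq_empty_or_nonempty {r | ∃ α, (n, α) ∈ Γ ∧ r = Φ (n, α) / n} with he | ⟨r, hr⟩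
  · rw [he]; simp [hC.le]
  · exact (hb r hr).1.trans (le_csSup hbdd hr)

lemma exists_of_lt_theta {d : ℕ} {Γ : Set (NPt d)} (hΓ : IsAdmissible Γ) {Φ : NPt d → ℝ}
    (hbdd : ∃ C : ℝ, 0 < C ∧ ∀ p ∈ Γ, |Φ p| ≤ C * p.1) {t : ℝ} (ht : t < thetaSup Γ Φ) :
    ∃ p ∈ Γ, 0 < p.1 ∧ t < Φ p / p.1 := by
  obtain ⟨C, hC, h⟩ := hbdd
  obtain ⟨K, hK⟩ := gradedPiece_eventually hΓ
  have hco : IsCoboundedUnder (· ≤ ·) atTop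
      (fun n : ℕ => sSup {r | ∃ α, (n, α) ∈ Γ ∧ r = Φ (n, α) / n}) :=
    (isBoundedUnder_of ⟨-C, fun n => (sup_bound hC h n).2.1⟩ :
      IsBoundedUnder (· ≥ ·) atTop _).isCoboundedUnder_le
  obtain ⟨n, hn, hnK⟩ := ((frequently_lt_of_lt_limsup hco ht).and_eventually
    (eventually_ge_atTop (K + 1))).exists
  obtain ⟨α, hα⟩ := hK n (by omega)
  have hne : {r | ∃ α, (n, α) ∈ Γ ∧ r = Φ (n, α) / n}.Nonempty := ⟨_, α, hα, rfl⟩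
  obtain ⟨r, ⟨β, hβ, rfl⟩, hr⟩ := exists_lt_of_lt_csSup hne hn
  exact ⟨(n, β), hβ, by simp only; omega, hr⟩

lemma eventually_of_theta_lt {d : ℕ} {Γ : Set (NPt d)} {Φ : NPt d → ℝ}
    (hbdd : ∃ C : ℝ, 0 < C ∧ ∀ p ∈ Γ, |Φ p| ≤ C * p.1) {t : ℝ} (ht : thetaSup Γ Φ < t) :
    ∀ᶠ n : ℕ in atTop, ∀ α, (n, α) ∈ Γ → Φ (n, α) / n < t := by
  obtain ⟨C, hC, h⟩ := hbdd
  have hco : IsBoundedUnder (· ≤ ·) atTop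
      (fun n : ℕ => sSup {r | ∃ α, (n, α) ∈ Γ ∧ r = Φ (n, α) / n}) :=
    isBoundedUnder_of ⟨C, fun n => (sup_bound hC h n).1⟩
  filter_upwards [eventually_lt_of_limsup_lt ht hco] with n hn α hα
  exact (le_csSup (sup_bound hC h n).2.2 ⟨α, hα, rfl⟩).trans_lt hn

lemma neg_le_theta {d : ℕ} {Γ : Set (NPt d)} (hΓ : IsAdmissible Γ) {Φ : NPt d → ℝ}
    {C : ℝ} (hC : 0 < C) (h : ∀ p ∈ Γ, |Φ p| ≤ C * p.1) : -C ≤ thetaSup Γ Φ := by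
  by_contra hlt
  push Not at hlt
  obtain ⟨K, hK⟩ := gradedPiece_eventually hΓ
  obtain ⟨n, hn, hnK⟩ := ((eventually_of_theta_lt ⟨C, hC, h⟩ hlt).and
    (eventually_ge_atTop K)).exists
  obtain ⟨α, hα⟩ := hK n hnK
  have h1 := hn α hα
  have h2 := (abs_le.1 (ratio_bound hC h hα)).1
  simp only at h2
  linarith

lemma superlevel_growth {d : ℕ} {Γ : Set (NPt d)} (hΓ : HasLinearGrowth Γ) (Φ : NPt d → ℝ)
    (t : ℝ) : HasLinearGrowth (superlevel Γ Φ t) := by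
  obtain ⟨C, hC, h⟩ := hΓ
  exact ⟨C, hC, fun p hp => h p hp.1⟩

lemma superlevel_admissible {d : ℕ} {Γ : Set (NPt d)} (hΓ : IsAdmissible Γ) {Φ : NPt d → ℝ}
    (hsuper : ∀ x ∈ Γ, ∀ y ∈ Γ, Φ x + Φ y ≤ Φ (x + y))
    (hbdd : ∃ C : ℝ, 0 < C ∧ ∀ p ∈ Γ, |Φ p| ≤ C * p.1) {t : ℝ} (ht : t < thetaSup Γ Φ) :
    IsAdmissible (superlevel Γ Φ t) := by
  obtain ⟨hs, hg, hgen⟩ := hΓ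
  refine ⟨?_, superlevel_growth hg Φ t, ?_⟩
  · intro x hx y hy
    refine ⟨hs x hx.1 y hy.1, ?_⟩
    have h1 := hsuper x hx.1 y hy.1
    have h2 := hx.2
    have h3 := hy.2
    simp only [Prod.fst_add, Nat.cast_add, add_mul]
    linarith
  · obtain ⟨q, hq, hq0, hqt⟩ := exists_of_lt_theta ⟨hs, hg, hgen⟩ hbdd ht
    have hq0' : (0 : ℝ) < q.1 := by exact_mod_cast hq0
    rw [lt_div_iff₀ hq0'] at hqt
    have hqs : q ∈ superlevel Γ Φ t := ⟨hq, by linarith⟩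
    unfold GeneratesFullLattice at hgen ⊢
    rw [eq_top_iff, ← hgen, AddSubgroup.closure_le]
    rintro _ ⟨γ, hγ, rfl⟩
    obtain ⟨N, hN⟩ := exists_nat_ge ((γ.1 * t - Φ γ) / (Φ q - t * q.1))
    rw [div_le_iff₀ (by linarith)] at hN
    have h1 := super_add_nsmul hs hsuper hγ hq N
    have h2 : γ + N • q ∈ superlevel Γ Φ t := by
      refine ⟨h1.1, le_trans ?_ h1.2⟩
      simp only [Prod.fst_add, Prod.smul_fst, smul_eq_mul, Nat.cast_add, Nat.cast_mul]
      linarith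
    have h3 : nptToInt γ = nptToInt (γ + N • q) - N • nptToInt q := by
      change nI γ = nI (γ + N • q) - N • nI q
      rw [map_add, map_nsmul]; abel
    rw [SetLike.mem_coe, h3]
    exact AddSubgroup.sub_mem _ (AddSubgroup.subset_closure (Set.mem_image_of_mem nptToInt h2))
      (AddSubgroup.nsmul_mem _ (AddSubgroup.subset_closure (Set.mem_image_of_mem nptToInt hqs)) _)

lemma volume_superlevel_le {d : ℕ} {Γ : Set (NPt d)} (hΓ : IsAdmissible Γ) {Φ : NPt d → ℝ}
    (hsuper : ∀ x ∈ Γ, ∀ y ∈ Γ, Φ x + Φ y ≤ Φ (x + y))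
    (hbdd : ∃ C : ℝ, 0 < C ∧ ∀ p ∈ Γ, |Φ p| ≤ C * p.1) {u t t₂ : ℝ} (ht : t < thetaSup Γ Φ)
    (hut : u < t) (htt : t < t₂) {q : NPt d} (hq : q ∈ Γ) (hq0 : 0 < q.1)
    (hqt : t₂ * q.1 ≤ Φ q) :
    volume.real (okounkovBody (superlevel Γ Φ u)) ≤
      volume.real (okounkovBody (superlevel Γ Φ t)) * (1 + (t - u) / (t₂ - t)) ^ d := by
  have hu := card_tendsto (superlevel_admissible hΓ hsuper hbdd (hut.trans ht))
  have htl := card_tendsto (superlevel_admissible hΓ hsuper hbdd ht)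
  have hq0' : (0 : ℝ) < q.1 := by exact_mod_cast hq0
  have hd1 : 0 < t₂ - t := by linarith
  have hd2 : 0 < t - u := by linarith
  set r : ℝ := (t - u) / (t₂ - t) with hr
  have hr0 : 0 < r := by positivity
  set b : ℕ → ℕ := fun k => ⌈r / q.1 * k⌉₊ with hb
  set K : ℕ → ℕ := fun k => k + b k * q.1 with hK
  have hcard : ∀ k, Nat.card (gradedPiece (superlevel Γ Φ u) k) ≤
      Nat.card (gradedPiece (superlevel Γ Φ t) (K k)) := by
    intro k
    have : Finite (gradedPiece (superlevel Γ Φ t) (K k)) :=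
      (gradedPiece_finite (superlevel_growth hΓ.2.1 Φ t) _).to_subtype
    refine Nat.card_le_card_of_injective
      (fun α : gradedPiece (superlevel Γ Φ u) k =>
        (⟨α.1 + b k • q.2, ?_⟩ : gradedPiece (superlevel Γ Φ t) (K k))) ?_
    · have h1 : (k, α.1) ∈ Γ := α.2.1
      have h2 : (k : ℝ) * u ≤ Φ (k, α.1) := α.2.2
      have h3 := super_add_nsmul hΓ.1 hsuper h1 hq (b k)
      have h4 : ((k, α.1) : NPt d) + b k • q = (K k, α.1 + b k • q.2) := by
        ext <;> simp [hK]
      rw [h4] at h3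
      refine ⟨h3.1, le_trans ?_ h3.2⟩
      have h5 : r / q.1 * k ≤ b k := Nat.le_ceil _
      have h6 : (t - u) * k ≤ b k * q.1 * (t₂ - t) := by
        have := mul_le_mul_of_nonneg_right h5 (mul_pos hq0' hd1).le
        have h7 : r / q.1 * k * (q.1 * (t₂ - t)) = (t - u) * k := by
          rw [hr]; field_simp
        rw [h7] at this
        linarith
      have h8 : (b k : ℝ) * (t₂ * q.1) ≤ b k * Φ q :=
        mul_le_mul_of_nonneg_left hqt (Nat.cast_nonneg _)
      simp only [hK, Nat.cast_add, Nat.cast_mul]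
      linarith
    · intro α β hab
      have := congrArg Subtype.val hab
      simp only [add_left_inj] at this
      exact Subtype.ext this
  have hKtop : Tendsto K atTop atTop :=
    tendsto_atTop_mono (fun k => Nat.le_add_right k _) tendsto_id
  have hKlim : Tendsto (fun k : ℕ => (K k : ℝ) / k) atTop (nhds (1 + r)) := by
    have h1 := ((tendsto_nat_ceil_mul_div_atTop (div_pos hr0 hq0').le).comp
      tendsto_natCast_atTop_atTop).mul_const (q.1 : ℝ)
    rw [div_mul_cancel₀ _ hq0'.ne'] at h1
    refine (h1.const_add 1).congr' ?_
    filter_upwards [eventually_gt_atTop 0] with k hk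
    have hk' : (0 : ℝ) < k := by exact_mod_cast hk
    simp only [hK, hb, Function.comp, Nat.cast_add, Nat.cast_mul]
    field_simp
  refine le_of_tendsto_of_tendsto hu ((htl.comp hKtop).mul (hKlim.pow d)) ?_
  filter_upwards [eventually_gt_atTop 0] with k hk
  have hk' : (0 : ℝ) < k := by exact_mod_cast hk
  have hKk : (0 : ℝ) < K k := by
    have : 0 < K k := by simp only [hK]; omega
    exact_mod_cast this
  simp only [Function.comp]
  rw [div_pow, div_mul_div_cancel₀ (by positivity)]
  gcongr
  exact hcard k

lemma exists_measure_of_tail {H : ℝ → ℝ} (hH : Antitone H) {A θ : ℝ}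
    (h1 : ∀ t, t < A → H t = 1) (h0 : ∀ t, θ < t → H t = 0)
    (hc : ∀ t, t < θ → ContinuousWithinAt H (Set.Iio t) t) :
    ∃ μ : Measure ℝ, IsProbabilityMeasure μ ∧ (∀ t, t ≠ θ → μ (Set.Ici t) = ENNReal.ofReal (H t)) ∧
      ∃ s : Set ℝ, IsCompact s ∧ μ sᶜ = 0 := by
  set F : ℝ → ℝ := fun t => 1 - H t with hF
  have hmono : Monotone F := fun a b hab => by simp only [hF]; linarith [hH hab]
  set S := hmono.stieltjesFunction with hS
  have hSv : ∀ x, S x = Function.rightLim F x := fun x => rfl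
  have hSlt : ∀ x, x < A → S x = 0 := by
    intro x hx
    rw [hSv]
    have : F =ᶠ[nhds x] fun _ => 0 := by
      filter_upwards [Iio_mem_nhds hx] with y hy
      simp [hF, h1 y hy]
    have h2 : ContinuousAt F x := this.continuousAt
    rw [ContinuousWithinAt.rightLim_eq h2.continuousWithinAt, this.eq_of_nhds]
  have hSgt : ∀ x, θ < x → S x = 1 := by
    intro x hx
    rw [hSv]
    have : F =ᶠ[nhds x] fun _ => 1 := by
      filter_upwards [Ioi_mem_nhds hx] with y hy
      simp [hF, h0 y hy]
    have h2 : ContinuousAt F x := this.continuousAt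
    rw [ContinuousWithinAt.rightLim_eq h2.continuousWithinAt, this.eq_of_nhds]
  have hbot : Tendsto S atBot (nhds 0) := by
    refine tendsto_const_nhds.congr' ?_
    filter_upwards [eventually_lt_atBot A] with x hx
    rw [hSlt x hx]
  have htop : Tendsto S atTop (nhds 1) := by
    refine tendsto_const_nhds.congr' ?_
    filter_upwards [eventually_gt_atTop θ] with x hx
    rw [hSgt x hx]
  have hp : IsProbabilityMeasure S.measure := S.isProbabilityMeasure hbot htop
  have htail : ∀ t, t ≠ θ → S.measure (Set.Ici t) = ENNReal.ofReal (H t) := by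
    intro t ht
    rw [S.measure_Ici htop]
    have h3 : ContinuousWithinAt F (Set.Iio t) t := by
      rcases lt_or_gt_of_ne ht with h | h
      · exact continuousWithinAt_const.sub (hc t h)
      · have : F =ᶠ[nhds t] fun _ => 1 := by
          filter_upwards [Ioi_mem_nhds h] with y hy
          simp [hF, h0 y hy]
        exact this.continuousAt.continuousWithinAt
    have h4 : Function.leftLim S t = F t := by
      have : (S : ℝ → ℝ) = Function.rightLim F := funext hSv
      rw [this, leftLim_rightLim (hmono.tendsto_leftLim t), hmono.continuousWithinAt_Iio_iff_leftLim_eq.1 h3]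
    rw [h4]
    congr 1
    simp [hF]
  refine ⟨S.measure, hp, htail, Set.Icc (min A θ - 1) (θ + 1), isCompact_Icc, ?_⟩
  have e1 := htail (θ + 1) (by linarith)
  rw [h0 _ (by linarith), ENNReal.ofReal_zero] at e1
  have hm : min A θ - 1 < A := by linarith [min_le_left A θ]
  have e2 := htail (min A θ - 1) (by linarith [min_le_right A θ])
  rw [h1 _ hm, ENNReal.ofReal_one] at e2
  have e3 : S.measure (Set.Ici (min A θ - 1))ᶜ = 0 := (prob_compl_eq_zero_iff measurableSet_Ici).2 e2
  refine measure_mono_null ?_ (measure_union_null e3 e1)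
  intro x hx
  simp only [Set.mem_compl_iff, Set.mem_Icc, not_and_or, not_le, Set.mem_union, Set.mem_Ici] at hx ⊢
  rcases hx with h | h
  · exact Or.inl h
  · exact Or.inr h.le

lemma tendsto_of_tail {ν : ℕ → Measure ℝ} {μ : Measure ℝ} [IsProbabilityMeasure μ] {θ : ℝ}
    (hν : ∀ᶠ k in atTop, IsProbabilityMeasure (ν k))
    (h : ∀ t, t ≠ θ → Tendsto (fun k => (ν k).real (Set.Ici t)) atTop
      (nhds (μ.real (Set.Ici t)))) (f : BoundedContinuousFunction ℝ ℝ) :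
    Tendsto (fun k => ∫ x, f x ∂(ν k)) atTop (nhds (∫ x, f x ∂μ)) := by
  classical
  let P : ℕ → ProbabilityMeasure ℝ := fun k =>
    if hk : IsProbabilityMeasure (ν k) then ⟨ν k, hk⟩ else ⟨μ, inferInstance⟩
  let M : ProbabilityMeasure ℝ := ⟨μ, inferInstance⟩
  have hP : ∀ᶠ k in atTop, (P k : Measure ℝ) = ν k := by
    filter_upwards [hν] with k hk
    have : P k = ⟨ν k, hk⟩ := dif_pos hk
    rw [this]
    rfl
  have key : Tendsto P atTop (nhds M) := by
    let S : Set (Set ℝ) := {s | ∃ a b, a ≠ θ ∧ b ≠ θ ∧ s = Set.Ico a b}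
    have hS : IsPiSystem S := by
      rintro - ⟨a, b, ha, hb, rfl⟩ - ⟨a', b', ha', hb', rfl⟩ -
      refine ⟨max a a', min b b', ?_, ?_, Set.Ico_inter_Ico⟩
      · rcases max_choice a a' with e | e <;> rw [e] <;> assumption
      · rcases min_choice b b' with e | e <;> rw [e] <;> assumption
    apply hS.tendsto_probabilityMeasure_of_tendsto_of_mem
    · rintro s ⟨a, b, -, -, rfl⟩
      exact measurableSet_Ico
    · intro u hu x hx
      obtain ⟨ε, hε, hb⟩ := Metric.isOpen_iff.1 hu x hx
      have hne : ∀ y : ℝ, ∀ δ > 0, ∃ z, y < z ∧ z < y + δ ∧ z ≠ θ := by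
        intro y δ hδ
        by_cases hh : y + δ / 2 = θ
        · exact ⟨y + δ / 3, by linarith, by linarith, by intro h2; linarith⟩
        · exact ⟨y + δ / 2, by linarith, by linarith, hh⟩
      obtain ⟨a, ha1, ha2, ha3⟩ := hne (x - ε) ε hε
      obtain ⟨b, hb1, hb2, hb3⟩ := hne x ε hε
      refine ⟨Set.Ico a b, ⟨a, b, ha3, hb3, rfl⟩, Ico_mem_nhds (by linarith) hb1, ?_⟩
      refine subset_trans ?_ hb
      rw [Real.ball_eq_Ioo]
      exact fun z hz => ⟨ha1.trans_le hz.1, hz.2.trans hb2⟩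
    · rintro s ⟨a, b, ha, hb, rfl⟩
      rw [← NNReal.tendsto_coe]
      have hco : ∀ (Q : ProbabilityMeasure ℝ), ((Q (Set.Ico a b) : ℝ≥0) : ℝ) =
          if a ≤ b then (Q : Measure ℝ).real (Set.Ici a) - (Q : Measure ℝ).real (Set.Ici b)
          else 0 := by
        intro Q
        change (Q : Measure ℝ).real (Set.Ico a b) = _
        split_ifs with hab
        · rw [← measureReal_sdiff (Set.Ici_subset_Ici.2 hab) measurableSet_Ici]
          congr 1
          ext z; simp
        · rw [Set.Ico_eq_empty (by intro h; exact hab h.le)]; simp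
      simp only [hco]
      split_ifs with hab
      · refine ((h a ha).sub (h b hb)).congr' ?_
        filter_upwards [hP] with k hk
        rw [hk]
      · exact tendsto_const_nhds
  have := (ProbabilityMeasure.tendsto_iff_forall_integral_tendsto.1 key) f
  refine this.congr' ?_
  filter_upwards [hP] with k hk
  rw [hk]

lemma empirical_prob {d : ℕ} {Γ : Set (NPt d)} (hg : HasLinearGrowth Γ) (Φ : NPt d → ℝ) {k : ℕ}
    (hne : (gradedPiece Γ k).Nonempty) : IsProbabilityMeasure (empiricalMeasure Γ Φ k) := by
  have hf : Finite {α : Fin d → ℕ // (k, α) ∈ Γ} := (gradedPiece_finite hg k).to_subtype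
  have hn : Nonempty {α : Fin d → ℕ // (k, α) ∈ Γ} := hne.to_subtype
  have : Fintype {α : Fin d → ℕ // (k, α) ∈ Γ} := Fintype.ofFinite _
  refine ⟨?_⟩
  rw [empiricalMeasure, Measure.smul_apply, Measure.sum_apply _ MeasurableSet.univ, tsum_fintype]
  simp only [measure_univ, Finset.sum_const, Finset.card_univ, nsmul_eq_mul, mul_one,
    Nat.card_eq_fintype_card, smul_eq_mul]
  refine ENNReal.inv_mul_cancel ?_ (ENNReal.natCast_ne_top _)
  exact_mod_cast Fintype.card_ne_zero

lemma empirical_tail {d : ℕ} {Γ : Set (NPt d)} (hg : HasLinearGrowth Γ) (Φ : NPt d → ℝ) {k : ℕ}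
    (hk : 0 < k) (t : ℝ) : (empiricalMeasure Γ Φ k).real (Set.Ici t) =
      (Nat.card (gradedPiece (superlevel Γ Φ t) k) : ℝ) / Nat.card (gradedPiece Γ k) := by
  classical
  have hf : Finite {α : Fin d → ℕ // (k, α) ∈ Γ} := (gradedPiece_finite hg k).to_subtype
  have : Fintype {α : Fin d → ℕ // (k, α) ∈ Γ} := Fintype.ofFinite _
  have hk' : (0 : ℝ) < k := by exact_mod_cast hk
  have hcard : Nat.card (gradedPiece (superlevel Γ Φ t) k) =
      (Finset.univ.filter (fun α : {α : Fin d → ℕ // (k, α) ∈ Γ} =>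
        t ≤ Φ (k, α.1) / k)).card := by
    rw [← Fintype.card_subtype, ← Nat.card_eq_fintype_card]
    refine Nat.card_congr
      { toFun := fun α => ⟨⟨α.1, α.2.1⟩, ?_⟩
        invFun := fun α => ⟨α.1.1, α.1.2, ?_⟩
        left_inv := fun α => rfl
        right_inv := fun α => rfl }
    · have := α.2.2
      rw [le_div_iff₀ hk']
      simp only at this
      linarith
    · have := α.2
      rw [le_div_iff₀ hk'] at this
      simp only
      linarith
  have hs : Measure.sum (fun α : {α : Fin d → ℕ // (k, α) ∈ Γ} =>
      Measure.dirac (Φ (k, α.1) / k)) (Set.Ici t) =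
      (Nat.card (gradedPiece (superlevel Γ Φ t) k) : ℝ≥0∞) := by
    rw [Measure.sum_apply _ measurableSet_Ici, tsum_fintype, hcard]
    simp only [Measure.dirac_apply' _ measurableSet_Ici, Set.indicator_apply, Set.mem_Ici,
      Pi.one_apply, Finset.sum_boole]
  rw [Measure.real, empiricalMeasure, Measure.smul_apply, hs, smul_eq_mul, ENNReal.toReal_mul,
    ENNReal.toReal_inv, ENNReal.toReal_natCast, ENNReal.toReal_natCast, mul_comm, ← div_eq_mul_inv]
  rfl

lemma superlevel_anti {d : ℕ} (Γ : Set (NPt d)) (Φ : NPt d → ℝ) {s t : ℝ} (h : s ≤ t) :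
    superlevel Γ Φ t ⊆ superlevel Γ Φ s := fun p hp =>
  ⟨hp.1, (mul_le_mul_of_nonneg_left h (Nat.cast_nonneg _)).trans hp.2⟩

lemma volume_superlevel_anti {d : ℕ} {Γ : Set (NPt d)} (hg : HasLinearGrowth Γ) (Φ : NPt d → ℝ)
    {s t : ℝ} (h : s ≤ t) : volume.real (okounkovBody (superlevel Γ Φ t)) ≤
      volume.real (okounkovBody (superlevel Γ Φ s)) :=
  measureReal_mono (okounkovBody_mono (superlevel_anti Γ Φ h))
    (volume_okounkovBody_ne_top (superlevel_growth hg Φ s))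

lemma superlevel_eq_self {d : ℕ} {Γ : Set (NPt d)} {Φ : NPt d → ℝ} {C : ℝ}
    (h : ∀ p ∈ Γ, |Φ p| ≤ C * p.1) {t : ℝ} (ht : t ≤ -C) : superlevel Γ Φ t = Γ := by
  refine Set.Subset.antisymm (fun p hp => hp.1) fun p hp => ⟨hp, ?_⟩
  have h1 := (abs_le.1 (h p hp)).1
  have h2 := mul_le_mul_of_nonneg_left ht (Nat.cast_nonneg (α := ℝ) p.1)
  linarith

lemma volume_superlevel_leftCont {d : ℕ} {Γ : Set (NPt d)} (hΓ : IsAdmissible Γ) {Φ : NPt d → ℝ}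
    (hsuper : ∀ x ∈ Γ, ∀ y ∈ Γ, Φ x + Φ y ≤ Φ (x + y))
    (hbdd : ∃ C : ℝ, 0 < C ∧ ∀ p ∈ Γ, |Φ p| ≤ C * p.1) {t : ℝ} (ht : t < thetaSup Γ Φ) :
    ContinuousWithinAt (fun u => volume.real (okounkovBody (superlevel Γ Φ u))) (Set.Iio t) t := by
  obtain ⟨q, hq, hq0, hqt⟩ := exists_of_lt_theta hΓ hbdd ht
  have hq0' : (0 : ℝ) < q.1 := by exact_mod_cast hq0
  set t₂ := Φ q / q.1 with ht₂
  have hlim : Tendsto (fun u => volume.real (okounkovBody (superlevel Γ Φ t)) *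
      (1 + (t - u) / (t₂ - t)) ^ d) (nhdsWithin t (Set.Iio t))
      (nhds (volume.real (okounkovBody (superlevel Γ Φ t)))) := by
    have hcont : Continuous (fun u => volume.real (okounkovBody (superlevel Γ Φ t)) *
      (1 + (t - u) / (t₂ - t)) ^ d) := by fun_prop
    have := (hcont.tendsto t).mono_left (nhdsWithin_le_nhds (s := Set.Iio t))
    simpa using this
  refine tendsto_of_tendsto_of_tendsto_of_le_of_le' tendsto_const_nhds hlim ?_ ?_
  · filter_upwards [self_mem_nhdsWithin] with u hu
    exact volume_superlevel_anti hΓ.2.1 Φ (le_of_lt hu)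
  · filter_upwards [self_mem_nhdsWithin] with u hu
    refine volume_superlevel_le hΓ hsuper hbdd ht hu hqt hq hq0 ?_
    rw [ht₂, div_mul_cancel₀ _ hq0'.ne']

/-- For a superadditive and linearly bounded `Φ` on an admissible graded subsemigroup `Γ`,
the graded pieces are eventually nonempty, the empirical measures `μ_k` converge weakly to a
compactly supported probability measure `μ`, and for `t < θ` one has
`μ([t,∞)) = vol(Δ(Γ^{Φ,≥t})) / vol(Δ(Γ))`. -/
theorem empiricalMeasure_tendsto_limit
    (d : ℕ) (hd : 1 ≤ d) (Γ : Set (NPt d)) (hΓ : IsAdmissible Γ)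
    (Φ : NPt d → ℝ)
    (hsuper : ∀ x ∈ Γ, ∀ y ∈ Γ, Φ x + Φ y ≤ Φ (x + y))
    (hbdd : ∃ C : ℝ, 0 < C ∧ ∀ p ∈ Γ, |Φ p| ≤ C * p.1) :
    (∃ K₀ : ℕ, ∀ k : ℕ, K₀ ≤ k → (gradedPiece Γ k).Nonempty) ∧
    ∃ μ : Measure ℝ, IsProbabilityMeasure μ ∧
      (∃ s : Set ℝ, IsCompact s ∧ μ sᶜ = 0) ∧
      (∀ f : BoundedContinuousFunction ℝ ℝ,
        Filter.Tendsto (fun k : ℕ => ∫ x, f x ∂(empiricalMeasure Γ Φ k)) Filter.atTop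
          (nhds (∫ x, f x ∂μ))) ∧
      (∀ t : ℝ, t < thetaSup Γ Φ →
        μ (Set.Ici t) = volume (okounkovBody (superlevel Γ Φ t)) / volume (okounkovBody Γ)) := by
  have hg := hΓ.2.1
  obtain ⟨C, hC, hCb⟩ := hbdd
  have hbdd : ∃ C : ℝ, 0 < C ∧ ∀ p ∈ Γ, |Φ p| ≤ C * p.1 := ⟨C, hC, hCb⟩
  obtain ⟨K₀, hK₀⟩ := gradedPiece_eventually hΓ
  have hV := volume_okounkovBody_real_pos hΓ
  set V := volume.real (okounkovBody Γ) with hVdef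
  set H : ℝ → ℝ := fun t => if t < thetaSup Γ Φ then
    volume.real (okounkovBody (superlevel Γ Φ t)) / V else 0 with hH
  have hHlt : ∀ t, t < thetaSup Γ Φ → H t = volume.real (okounkovBody (superlevel Γ Φ t)) / V :=
    fun t ht => if_pos ht
  have hanti : Antitone H := by
    intro a b hab
    by_cases hb : b < thetaSup Γ Φ
    · rw [hHlt b hb, hHlt a (hab.trans_lt hb)]
      exact div_le_div_of_nonneg_right (volume_superlevel_anti hg Φ hab) hV.le
    · have : H b = 0 := if_neg hb
      rw [this]
      simp only [hH]
      split_ifs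
      · positivity
      · exact le_rfl
  have hneg := neg_le_theta hΓ hC hCb
  have h1 : ∀ t, t < -C → H t = 1 := by
    intro t ht
    rw [hHlt t (ht.trans_le hneg), superlevel_eq_self hCb ht.le, div_self hV.ne']
  have h0 : ∀ t, thetaSup Γ Φ < t → H t = 0 := fun t ht => if_neg (not_lt.2 ht.le)
  have hc : ∀ t, t < thetaSup Γ Φ → ContinuousWithinAt H (Set.Iio t) t := by
    intro t ht
    refine ((volume_superlevel_leftCont hΓ hsuper hbdd ht).div_const V).congr ?_ (hHlt t ht)
    intro u hu
    exact hHlt u (lt_trans hu ht)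
  obtain ⟨μ, hμ, htail, hsupp⟩ := exists_measure_of_tail hanti h1 h0 hc
  have hH0 : ∀ t, 0 ≤ H t := by
    intro t
    simp only [hH]
    split_ifs
    · positivity
    · exact le_rfl
  refine ⟨⟨K₀, hK₀⟩, μ, hμ, hsupp, ?_, ?_⟩
  · refine fun f => tendsto_of_tail (θ := thetaSup Γ Φ) ?_ ?_ f
    · filter_upwards [eventually_ge_atTop K₀] with k hk
      exact empirical_prob hg Φ (hK₀ k hk)
    · intro t ht
      have e : μ.real (Set.Ici t) = H t := by
        rw [Measure.real, htail t ht, ENNReal.toReal_ofReal (hH0 t)]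
      rw [e]
      rcases lt_or_gt_of_ne ht with h | h
      · rw [hHlt t h]
        refine ((card_tendsto (superlevel_admissible hΓ hsuper hbdd h)).div
          (card_tendsto hΓ) hV.ne').congr' ?_
        filter_upwards [eventually_gt_atTop 0] with k hk
        have hk' : (0 : ℝ) < k := by exact_mod_cast hk
        rw [empirical_tail hg Φ hk t, Pi.div_apply, div_div_div_cancel_right₀ (by positivity)]
      · rw [h0 t h]
        refine tendsto_const_nhds.congr' ?_
        filter_upwards [eventually_gt_atTop 0, eventually_of_theta_lt hbdd h] with k hk hlt
        have hk' : (0 : ℝ) < k := by exact_mod_cast hk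
        have hem : gradedPiece (superlevel Γ Φ t) k = ∅ := by
          refine Set.eq_empty_of_forall_notMem fun α hα => ?_
          have h2 := hlt α hα.1
          have h3 := hα.2
          rw [div_lt_iff₀ hk'] at h2
          simp only at h3
          linarith
        rw [empirical_tail hg Φ hk t, hem]
        simp
  · intro t ht
    rw [htail t ht.ne, hHlt t ht, ENNReal.ofReal_div_of_pos hV, hVdef,
      ofReal_measureReal (volume_okounkovBody_ne_top (superlevel_growth hg Φ t)),
      ofReal_measureReal (volume_okounkovBody_ne_top hg)]
end

section
/- Let d ≥ 1, let Γ ⊆ ℕ^{1+d} be an admissible graded subsemigroup, and let Φ, Φ' : Γ → ℝ be two superadditive functions, each linearly bounded, i.e. there is C > 0 with |Φ(m,α)| ≤ C·m and |Φ'(m,α)| ≤ C·m on Γ. Then the graded pieces Γ_k are nonempty for all sufficiently large k, and the probability measures ν_k = (#Γ_k)^{-1} Σ_{α ∈ Γ_k} δ_{(Φ'(k,α) − Φ(k,α))/k} on ℝ converge weakly to a compactly supported probability measure on ℝ. -/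
open scoped BigOperators
open Filter MeasureTheory
open scoped ENNReal NNReal

/-- The relative empirical measure
`ν_k = (#Γ_k)⁻¹ Σ_{α ∈ Γ_k} δ_{(Φ'(k,α) − Φ(k,α))/k}` on `ℝ`. -/
noncomputable def relEmpiricalMeasure {d : ℕ} (Γ : Set (NPt d)) (Φ Φ' : NPt d → ℝ) (k : ℕ) :
    Measure ℝ :=
  (Nat.card {α : Fin d → ℕ // (k, α) ∈ Γ} : ℝ≥0∞)⁻¹ •
    Measure.sum (fun α : {α : Fin d → ℕ // (k, α) ∈ Γ} =>
      Measure.dirac ((Φ' (k, α.1) - Φ (k, α.1)) / k))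

namespace RelEmp

lemma toR_add {d : ℕ} (x y : NPt d) : nptToReal (x + y) = nptToReal x + nptToReal y := by
  ext <;> simp [nptToReal]

lemma toI_inj {d : ℕ} {x y : NPt d} (h : nptToInt x = nptToInt y) : x = y := by
  have h1 := congrArg Prod.fst h
  have h2 := congrArg Prod.snd h
  ext i
  · simpa [nptToInt] using h1
  · simpa [nptToInt] using congrFun h2 i

lemma toI_add {d : ℕ} (x y : NPt d) : nptToInt (x + y) = nptToInt x + nptToInt y := by
  ext <;> simp [nptToInt]

lemma toI_nsmul {d : ℕ} (n : ℕ) (x : NPt d) : nptToInt (n • x) = (n : ℤ) • nptToInt x := by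
  ext <;> simp [nptToInt]

lemma toI_sum {d : ℕ} {ι : Type} (s : Finset ι) (x : ι → NPt d) :
    nptToInt (∑ i ∈ s, x i) = ∑ i ∈ s, nptToInt (x i) := by
  classical
  induction s using Finset.induction_on with
  | empty => ext <;> simp [nptToInt]
  | insert a s ha ih => rw [Finset.sum_insert ha, Finset.sum_insert ha, toI_add, ih]

/-- The family generates the full lattice. -/
def Gen {d : ℕ} {ι : Type} (p : ι → NPt d) : Prop :=
  AddSubgroup.closure (Set.range (fun i => nptToInt (p i))) = ⊤

lemma Gen.rep {d : ℕ} {ι : Type} [Fintype ι] {p : ι → NPt d} (h : Gen p)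
    (f : ℤ × (Fin d → ℤ)) : ∃ n : ι → ℤ, ∑ i, n i • nptToInt (p i) = f := by
  rw [← Submodule.mem_span_range_iff_exists_fun ℤ (v := fun i => nptToInt (p i))]
  have : f ∈ AddSubgroup.closure (Set.range (fun i => nptToInt (p i))) := by
    rw [h]; trivial
  rw [← Submodule.span_int_eq_addSubgroupClosure] at this
  exact this

lemma Gen.mono {d : ℕ} {ι κ : Type} {p : ι → NPt d} {q : κ → NPt d} (h : Gen p)
    (g : ι → κ) (hg : ∀ i, q (g i) = p i) : Gen q := by
  unfold Gen at *
  rw [eq_top_iff, ← h]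
  apply AddSubgroup.closure_mono
  rintro _ ⟨i, rfl⟩
  exact ⟨g i, by simp [hg]⟩

lemma Gen.exists_pos {d : ℕ} {ι : Type} [Fintype ι] {p : ι → NPt d} (h : Gen p) :
    ∃ i, 0 < (p i).1 := by
  by_contra! hc
  obtain ⟨n, hn⟩ := h.rep (1, 0)
  have := congrArg Prod.fst hn
  rw [Prod.fst_sum] at this
  have h0 : ∀ i, (p i).1 = 0 := fun i => by have := hc i; omega
  simp [nptToInt, h0] at this

lemma exists_gen {d : ℕ} {Γ : Set (NPt d)} (h : GeneratesFullLattice Γ) :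
    ∃ (S : Finset (NPt d)), (↑S ⊆ Γ) ∧ Gen (fun i : S => (i : NPt d)) := by
  classical
  unfold GeneratesFullLattice at h
  have h1 : Submodule.span ℤ (nptToInt '' Γ) = ⊤ := by
    rw [eq_top_iff]
    intro x _
    have : x ∈ AddSubgroup.closure (nptToInt '' Γ) := by rw [h]; trivial
    rw [← Submodule.span_int_eq_addSubgroupClosure] at this
    exact this
  have h2 : (Submodule.span ℤ (nptToInt '' Γ)).FG := by
    rw [h1]; exact Module.Finite.fg_top
  obtain ⟨s, hs, hs'⟩ := Submodule.fg_span_iff_fg_span_finset_subset _ |>.1 h2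
  obtain ⟨S, hS, hS'⟩ := Finset.subset_set_image_iff.1 hs
  refine ⟨S, hS, ?_⟩
  unfold Gen
  have : Set.range (fun i : S => nptToInt (i : NPt d)) = (s : Set _) := by
    rw [← hS']; ext x; simp
  rw [this, ← Submodule.span_int_eq_addSubgroupClosure, ← hs', h1]
  rfl

lemma super_sum {d : ℕ} {Γ : Set (NPt d)} (hΓ : IsGradedSubsemigroup Γ) {Φ : NPt d → ℝ}
    (hΦ : ∀ x ∈ Γ, ∀ y ∈ Γ, Φ x + Φ y ≤ Φ (x + y)) {ι : Type} (p : ι → NPt d)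
    (hp : ∀ i, p i ∈ Γ) (e : ι → ℕ) (he : ∀ i, 1 ≤ e i) (s : Finset ι) (hs : s.Nonempty) :
    (∑ i ∈ s, e i • p i) ∈ Γ ∧ ∑ i ∈ s, (e i : ℝ) * Φ (p i) ≤ Φ (∑ i ∈ s, e i • p i) := by
  have single : ∀ x ∈ Γ, ∀ n : ℕ, 1 ≤ n → n • x ∈ Γ ∧ (n : ℝ) * Φ x ≤ Φ (n • x) := by
    intro x hx n hn
    induction n, hn using Nat.le_induction with
    | base => simpa using hx
    | succ n hn ih =>
      rw [succ_nsmul]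
      refine ⟨hΓ _ ih.1 _ hx, ?_⟩
      have := hΦ _ ih.1 _ hx
      push_cast
      linarith [ih.2]
  induction hs using Finset.Nonempty.cons_induction with
  | singleton a => simpa using single _ (hp a) _ (he a)
  | cons a s ha hs ih =>
    rw [Finset.sum_cons, Finset.sum_cons]
    have h1 := single _ (hp a) _ (he a)
    refine ⟨hΓ _ h1.1 _ ih.1, ?_⟩
    have := hΦ _ h1.1 _ ih.1
    linarith [ih.2, h1.2]

lemma key {d : ℕ} {Γ : Set (NPt d)} (hΓ : IsGradedSubsemigroup Γ) {Φ : NPt d → ℝ}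
    (hΦ : ∀ x ∈ Γ, ∀ y ∈ Γ, Φ x + Φ y ≤ Φ (x + y)) {ι : Type} [Fintype ι] (p : ι → NPt d)
    (hp : ∀ i, p i ∈ Γ) (hgen : Gen p) :
    ∃ N M : ℝ, ∀ (z : NPt d) (c : ι → ℝ), (∀ i, N ≤ c i) →
      nptToReal z = ∑ i, c i • nptToReal (p i) →
      z ∈ Γ ∧ ∑ i, c i * Φ (p i) - M ≤ Φ z := by
  classical
  choose n hn using hgen.rep
  set F : Finset (ℤ × (Fin d → ℤ)) := Finset.Icc 0 (∑ i, nptToInt (p i)) with hF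
  set N₀ : ℤ := ∑ f ∈ F, ∑ i, |n f i| with hN₀
  have hb : ∀ f ∈ F, ∀ i, |n f i| ≤ N₀ := by
    intro f hf i
    calc |n f i| ≤ ∑ i, |n f i| :=
          Finset.single_le_sum (f := fun i => |n f i|) (fun _ _ => abs_nonneg _) (Finset.mem_univ i)
      _ ≤ N₀ := Finset.single_le_sum (f := fun f => ∑ i, |n f i|)
          (fun _ _ => Finset.sum_nonneg fun _ _ => abs_nonneg _) hf
  refine ⟨N₀ + 2, ∑ i, (1 + N₀) * |Φ (p i)|, ?_⟩
  intro z c hc hz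
  set f : ℤ × (Fin d → ℤ) := nptToInt z - ∑ i, ⌊c i⌋ • nptToInt (p i) with hf
  have hz1 : (z.1 : ℝ) = ∑ i, c i * ((p i).1 : ℝ) := by
    have := congrArg Prod.fst hz
    rw [Prod.fst_sum] at this
    simpa [nptToReal] using this
  have hz2 : ∀ j, (z.2 j : ℝ) = ∑ i, c i * ((p i).2 j : ℝ) := by
    intro j
    have := congrFun (congrArg Prod.snd hz) j
    rw [Prod.snd_sum, Finset.sum_apply] at this
    simpa [nptToReal] using this
  have aux : ∀ (w : ℕ) (r : ι → ℕ), (w : ℝ) = ∑ i, c i * (r i : ℝ) →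
      0 ≤ (w : ℤ) - ∑ i, ⌊c i⌋ * (r i : ℤ) ∧ (w : ℤ) - ∑ i, ⌊c i⌋ * (r i : ℤ) ≤ ∑ i, (r i : ℤ) := by
    intro w r h
    have e : (((w : ℤ) - ∑ i, ⌊c i⌋ * (r i : ℤ) : ℤ) : ℝ) = ∑ i, Int.fract (c i) * (r i : ℝ) := by
      push_cast
      rw [h, ← Finset.sum_sub_distrib]
      refine Finset.sum_congr rfl fun i _ => ?_
      rw [← Int.self_sub_floor]; ring
    constructor
    · have : (0 : ℝ) ≤ (((w : ℤ) - ∑ i, ⌊c i⌋ * (r i : ℤ) : ℤ) : ℝ) := by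
        rw [e]; exact Finset.sum_nonneg fun i _ => mul_nonneg (Int.fract_nonneg _) (by positivity)
      exact_mod_cast this
    · have : (((w : ℤ) - ∑ i, ⌊c i⌋ * (r i : ℤ) : ℤ) : ℝ) ≤ ((∑ i, (r i : ℤ) : ℤ) : ℝ) := by
        rw [e]; push_cast
        refine Finset.sum_le_sum fun i _ => ?_
        have := (Int.fract_lt_one (c i)).le
        nlinarith [Nat.cast_nonneg (α := ℝ) (r i)]
      exact_mod_cast this
  have hfF : f ∈ F := by
    have a1 := aux z.1 (fun i => (p i).1) hz1
    have a2 := fun j => aux (z.2 j) (fun i => (p i).2 j) (hz2 j)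
    rw [hF, Finset.mem_Icc, Prod.le_def, Prod.le_def, Pi.le_def, Pi.le_def]
    simp only [hf, Prod.fst_sub, Prod.snd_sub, Prod.fst_sum, Prod.snd_sum, Pi.sub_apply,
      Finset.sum_apply, Prod.smul_fst, Prod.smul_snd, Pi.smul_apply, nptToInt, smul_eq_mul,
      Prod.fst_zero, Prod.snd_zero, Pi.zero_apply]
    exact ⟨⟨a1.1, fun j => (a2 j).1⟩, ⟨a1.2, fun j => (a2 j).2⟩⟩
  have hfl : ∀ i, N₀ + 2 ≤ ⌊c i⌋ := by
    intro i
    rw [Int.le_floor]; push_cast; exact hc i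
  have hpos : ∀ i, 1 ≤ ⌊c i⌋ + n f i := by
    intro i
    have := hb f hfF i
    have := neg_abs_le (n f i)
    have := hfl i
    omega
  set e : ι → ℕ := fun i => (⌊c i⌋ + n f i).toNat with he
  have hei : ∀ i, (e i : ℤ) = ⌊c i⌋ + n f i := fun i =>
    Int.toNat_of_nonneg (by have := hpos i; omega)
  have hze : z = ∑ i, e i • p i := by
    apply toI_inj
    rw [toI_sum]
    simp only [toI_nsmul, hei, add_smul, Finset.sum_add_distrib, hn f]
    rw [hf]; abel
  obtain ⟨i₀, -⟩ := hgen.exists_pos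
  have hs := super_sum hΓ hΦ p hp e (fun i => by have := hpos i; have := hei i; omega)
    Finset.univ ⟨i₀, Finset.mem_univ _⟩
  rw [← hze] at hs
  refine ⟨hs.1, le_trans ?_ hs.2⟩
  rw [← Finset.sum_sub_distrib]
  refine Finset.sum_le_sum fun i _ => ?_
  have h1 : (e i : ℝ) = (⌊c i⌋ : ℝ) + n f i := by exact_mod_cast hei i
  have h2 : |(n f i : ℝ)| ≤ N₀ := by exact_mod_cast hb f hfF i
  have h3 : |c i - e i| ≤ 1 + N₀ := by
    have := abs_le.1 h2
    have := Int.floor_le (c i)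
    have := Int.lt_floor_add_one (c i)
    rw [abs_le, h1]; constructor <;> linarith
  have h4 : (c i - e i) * Φ (p i) ≤ (1 + N₀) * |Φ (p i)| := by
    refine (le_abs_self _).trans ?_
    rw [abs_mul]; gcongr
  linarith

/-- Strictly positive combinations of generating families. -/
def PosRep {d : ℕ} (Γ : Set (NPt d)) (v : ℝ × (Fin d → ℝ)) : Prop :=
  ∃ (ι : Type) (_ : Fintype ι) (p : ι → NPt d) (a : ι → ℝ), (∀ i, p i ∈ Γ) ∧ Gen p ∧
    (∀ i, 0 < a i) ∧ v = ∑ i, a i • nptToReal (p i)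

lemma PosRep.add {d : ℕ} {Γ : Set (NPt d)} {v w : ℝ × (Fin d → ℝ)} (hv : PosRep Γ v)
    (hw : PosRep Γ w) : PosRep Γ (v + w) := by
  obtain ⟨ι, _, p, a, h1, h2, h3, rfl⟩ := hv
  obtain ⟨κ, _, q, b, g1, g2, g3, rfl⟩ := hw
  refine ⟨ι ⊕ κ, inferInstance, Sum.elim p q, Sum.elim a b, ?_, ?_, ?_, ?_⟩
  · rintro (i | i) <;> simp [h1, g1]
  · exact h2.mono Sum.inl (fun i => rfl)
  · rintro (i | i) <;> simp [h3, g3]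
  · simp

lemma PosRep.add_mem {d : ℕ} {Γ : Set (NPt d)} {v : ℝ × (Fin d → ℝ)} (hv : PosRep Γ v)
    {q : NPt d} (hq : q ∈ Γ) {s : ℝ} (hs : 0 < s) : PosRep Γ (v + s • nptToReal q) := by
  obtain ⟨ι, _, p, a, h1, h2, h3, rfl⟩ := hv
  refine ⟨ι ⊕ Unit, inferInstance, Sum.elim p (fun _ => q), Sum.elim a (fun _ => s), ?_, ?_, ?_, ?_⟩
  · rintro (i | i) <;> simp [h1, hq]
  · exact h2.mono Sum.inl (fun i => rfl)
  · rintro (i | i) <;> simp [h3, hs]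
  · simp

lemma PosRep.smul {d : ℕ} {Γ : Set (NPt d)} {v : ℝ × (Fin d → ℝ)} (hv : PosRep Γ v)
    {s : ℝ} (hs : 0 < s) : PosRep Γ (s • v) := by
  obtain ⟨ι, _, p, a, h1, h2, h3, rfl⟩ := hv
  refine ⟨ι, inferInstance, p, fun i => s * a i, h1, h2, fun i => mul_pos hs (h3 i), ?_⟩
  rw [Finset.smul_sum]; simp [mul_smul]

lemma Gen.isOpenMap {d : ℕ} {ι : Type} [Fintype ι] {p : ι → NPt d} (h : Gen p) :
    IsOpenMap (fun c : ι → ℝ => ∑ i, c i • nptToReal (p i)) := by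
  have hs : Function.Surjective (Fintype.linearCombination ℝ (fun i => nptToReal (p i))) := by
    rw [← LinearMap.range_eq_top, eq_top_iff]
    have hI : ∀ f : ℤ × (Fin d → ℤ), (((f.1 : ℝ), fun i => (f.2 i : ℝ)) : ℝ × (Fin d → ℝ)) ∈
        LinearMap.range (Fintype.linearCombination ℝ (fun i => nptToReal (p i))) := by
      intro f
      obtain ⟨n, hn⟩ := h.rep f
      refine ⟨fun i => n i, ?_⟩
      rw [Fintype.linearCombination_apply, ← hn]
      ext j
      · simp [Prod.fst_sum, nptToReal, nptToInt]
      · simp [Prod.snd_sum, nptToReal, nptToInt]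
    rintro ⟨r, x⟩ -
    have e : ((r, x) : ℝ × (Fin d → ℝ)) = r • ((1 : ℝ), (0 : Fin d → ℝ)) +
        ∑ j, x j • ((0 : ℝ), (Pi.single j 1 : Fin d → ℝ)) := by
      ext j
      · simp [Prod.fst_sum]
      · simp [Prod.snd_sum, Pi.single_apply]
    rw [e]
    refine Submodule.add_mem _ (Submodule.smul_mem _ _ ?_)
      (Submodule.sum_mem _ fun j _ => Submodule.smul_mem _ _ ?_)
    · convert hI (1, 0) using 1
      ext <;> simp
    · convert hI (0, Pi.single j 1) using 1
      ext k
      · simp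
      · by_cases hk : k = j
        · subst hk; simp
        · simp [hk]
  exact LinearMap.isOpenMap_of_finiteDimensional _ hs

lemma isOpen_posRep {d : ℕ} (Γ : Set (NPt d)) : IsOpen {v | PosRep Γ v} := by
  rw [isOpen_iff_mem_nhds]
  rintro v ⟨ι, _, p, a, h1, h2, h3, rfl⟩
  have ho : IsOpen {c : ι → ℝ | ∀ i, 0 < c i} := by
    simp only [Set.ofPred_forall]
    exact isOpen_iInter_of_finite fun i => isOpen_lt continuous_const (continuous_apply i)
  refine Filter.mem_of_superset ((h2.isOpenMap _ ho).mem_nhds ⟨a, h3, rfl⟩) ?_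
  rintro _ ⟨c, hc, rfl⟩
  exact ⟨ι, inferInstance, p, c, h1, h2, hc, rfl⟩

lemma tendsto_of_almost_mono {u : ℕ → ℝ} {B : ℝ} (hB : ∀ᶠ k in atTop, |u k| ≤ B)
    (h : ∀ ε > 0, ∀ᶠ k in atTop, ∀ᶠ m in atTop, u k - ε ≤ u m) :
    ∃ l, Tendsto u atTop (nhds l) := by
  have b1 : IsBoundedUnder (· ≤ ·) atTop u :=
    ⟨B, by simpa using hB.mono fun k hk => (abs_le.1 hk).2⟩
  have b2 : IsBoundedUnder (· ≥ ·) atTop u :=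
    ⟨-B, by simpa using hB.mono fun k hk => (abs_le.1 hk).1⟩
  refine ⟨limsup u atTop, tendsto_of_le_liminf_of_limsup_le ?_ le_rfl b1 b2⟩
  refine le_of_forall_pos_le_add fun ε hε => ?_
  refine limsup_le_of_le b2.isCoboundedUnder_le ?_
  filter_upwards [h ε hε] with k hk
  have := le_liminf_of_le b1.isCoboundedUnder_ge hk
  linarith

/-- The lattice point of degree `k` approximating `k x`. -/
noncomputable def zpt {d : ℕ} (x : Fin d → ℝ) (k : ℕ) : NPt d := (k, fun i => ⌊x i * k⌋₊)

lemma PosRep.nonneg {d : ℕ} {Γ : Set (NPt d)} {v : ℝ × (Fin d → ℝ)} (h : PosRep Γ v) (j : Fin d) :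
    0 ≤ v.2 j := by
  obtain ⟨ι, _, p, a, h1, h2, h3, rfl⟩ := h
  rw [Prod.snd_sum, Finset.sum_apply]
  refine Finset.sum_nonneg fun i _ => ?_
  have := h3 i
  simp only [nptToReal, Prod.smul_snd, Pi.smul_apply, smul_eq_mul]
  positivity

lemma zpt_tendsto {d : ℕ} {x : Fin d → ℝ} (hx : ∀ j, 0 ≤ x j) :
    Tendsto (fun k : ℕ => (k : ℝ)⁻¹ • nptToReal (zpt x k)) atTop (nhds ((1 : ℝ), x)) := by
  refine Tendsto.prodMk_nhds (f := atTop) (mx := fun k : ℕ => ((k : ℝ)⁻¹ • nptToReal (zpt x k)).1)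
    (my := fun k : ℕ => ((k : ℝ)⁻¹ • nptToReal (zpt x k)).2) ?_ ?_
  · refine tendsto_const_nhds.congr' ?_
    filter_upwards [eventually_gt_atTop 0] with k hk
    have : (k : ℝ) ≠ 0 := by positivity
    simp [nptToReal, zpt, this]
  · rw [tendsto_pi_nhds]
    intro j
    refine ((tendsto_nat_floor_mul_div_atTop (hx j)).comp tendsto_natCast_atTop_atTop).congr ?_
    intro k
    simp [nptToReal, zpt, div_eq_inv_mul]

lemma core {d : ℕ} {Γ : Set (NPt d)} (hΓ : IsGradedSubsemigroup Γ) {Φ : NPt d → ℝ}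
    (hΦ : ∀ x ∈ Γ, ∀ y ∈ Γ, Φ x + Φ y ≤ Φ (x + y)) {C : ℝ} (hC : 0 < C)
    (hb : ∀ p ∈ Γ, |Φ p| ≤ C * p.1) {x : Fin d → ℝ} (hx : PosRep Γ (1, x)) :
    (∀ᶠ k in atTop, zpt x k ∈ Γ) ∧ ∃ l, Tendsto (fun k : ℕ => Φ (zpt x k) / k) atTop (nhds l) := by
  have hlim := zpt_tendsto (x := x) (fun j => hx.nonneg j)
  obtain ⟨ι, _, p, a, hp, hgen, ha, hxa⟩ := hx
  set W : Set (ι → ℝ) := {c | ∀ i, a i / 2 < c i ∧ c i < 2 * a i} with hW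
  have hWo : IsOpen W := by
    simp only [hW, Set.ofPred_forall]
    exact isOpen_iInter_of_finite fun i => (isOpen_lt continuous_const (continuous_apply i)).inter
      (isOpen_lt (continuous_apply i) continuous_const)
  have haW : a ∈ W := fun i => ⟨by linarith [ha i], by linarith [ha i]⟩
  have hV := (hgen.isOpenMap _ hWo).mem_nhds ⟨a, haW, rfl⟩
  simp only [← hxa] at hV
  have hmem : ∀ᶠ k in atTop, zpt x k ∈ Γ := by
    obtain ⟨N, M, hNM⟩ := key hΓ hΦ p hp hgen
    have hbig : ∀ᶠ k : ℕ in atTop, ∀ i, N ≤ k * (a i / 2) := by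
      rw [eventually_all]
      intro i
      exact (tendsto_natCast_atTop_atTop.atTop_mul_const (half_pos (ha i))).eventually_ge_atTop N
    filter_upwards [hlim hV, hbig, eventually_gt_atTop 0] with k hk hk2 hk0
    obtain ⟨b, hbW, hbe⟩ := hk
    beta_reduce at hbe
    have hk0' : (0 : ℝ) < k := by exact_mod_cast hk0
    refine (hNM (zpt x k) (fun i => k * b i) (fun i => (hk2 i).trans ?_) ?_).1
    · exact mul_le_mul_of_nonneg_left (hbW i).1.le hk0'.le
    · have : nptToReal (zpt x k) = (k : ℝ) • ((k : ℝ)⁻¹ • nptToReal (zpt x k)) := by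
        rw [smul_smul, mul_inv_cancel₀ hk0'.ne', one_smul]
      rw [this, ← hbe, Finset.smul_sum]
      simp [mul_smul]
  refine ⟨hmem, ?_⟩
  have hub : ∀ᶠ k : ℕ in atTop, |Φ (zpt x k) / k| ≤ C := by
    filter_upwards [hmem, eventually_gt_atTop 0] with k hk hk0
    have hk0' : (0 : ℝ) < k := by exact_mod_cast hk0
    rw [abs_div, abs_of_pos hk0', div_le_iff₀ hk0']
    exact hb _ hk
  refine tendsto_of_almost_mono hub fun ε hε => ?_
  set B : ℝ := ∑ i, 2 * a i * |Φ (p i)| with hB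
  have hB0 : 0 ≤ B := Finset.sum_nonneg fun i _ => by have := ha i; positivity
  obtain ⟨δ, hδ0, hδ1, hδ⟩ : ∃ δ : ℝ, 0 < δ ∧ δ < 1 ∧ δ * (B + C) ≤ ε / 2 := by
    refine ⟨min (1 / 2) (ε / 2 / (B + C)), by positivity, ?_, ?_⟩
    · exact (min_le_left _ _).trans_lt (by norm_num)
    · rw [← le_div_iff₀ (by positivity)]; exact min_le_right _ _
  have hlim2 : Tendsto (fun km : ℕ × ℕ => δ⁻¹ • ((km.2 : ℝ)⁻¹ • nptToReal (zpt x km.2) -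
      (1 - δ) • ((km.1 : ℝ)⁻¹ • nptToReal (zpt x km.1)))) (atTop ×ˢ atTop) (nhds ((1 : ℝ), x)) := by
    have h1 := hlim.comp (tendsto_snd (f := (atTop : Filter ℕ)) (g := (atTop : Filter ℕ)))
    have h2 := hlim.comp (tendsto_fst (f := (atTop : Filter ℕ)) (g := (atTop : Filter ℕ)))
    have h3 := (h1.sub (h2.const_smul (1 - δ))).const_smul δ⁻¹
    have e : δ⁻¹ • (((1 : ℝ), x) - (1 - δ) • ((1 : ℝ), x)) = ((1 : ℝ), x) := by
      rw [sub_smul, one_smul, sub_sub_cancel, smul_smul, inv_mul_cancel₀ hδ0.ne', one_smul]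
    rw [e] at h3
    exact h3
  filter_upwards [(hlim2.eventually hV).curry, hmem, hub, eventually_gt_atTop 0]
    with k hkm hkΓ hku hk0
  have hk0' : (0 : ℝ) < k := by exact_mod_cast hk0
  obtain ⟨N, M, hNM⟩ := key hΓ hΦ (fun o : Option ι => o.elim (zpt x k) p)
    (by rintro (_ | i) <;> simp [hkΓ, hp]) (hgen.mono some (fun i => rfl))
  have hbig : ∀ᶠ m : ℕ in atTop, ∀ i, N ≤ m * (δ * (a i / 2)) := by
    rw [eventually_all]
    intro i
    exact (tendsto_natCast_atTop_atTop.atTop_mul_const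
      (mul_pos hδ0 (half_pos (ha i)))).eventually_ge_atTop N
  have hbig2 : ∀ᶠ m : ℕ in atTop, N ≤ m * ((1 - δ) / k) :=
    (tendsto_natCast_atTop_atTop.atTop_mul_const
      (div_pos (sub_pos.2 hδ1) hk0')).eventually_ge_atTop N
  have hbig3 : ∀ᶠ m : ℕ in atTop, M ≤ m * (ε / 2) :=
    (tendsto_natCast_atTop_atTop.atTop_mul_const (half_pos hε)).eventually_ge_atTop M
  filter_upwards [hkm, hbig, hbig2, hbig3, eventually_gt_atTop 0] with m hm hm1 hm2 hm3 hm0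
  have hm0' : (0 : ℝ) < m := by exact_mod_cast hm0
  obtain ⟨b, hbW, hbe⟩ := hm
  have hmain := (hNM (zpt x m) (fun o => o.elim (m * ((1 - δ) / k)) (fun i => m * (δ * b i))) ?_ ?_).2
  · simp only [Fintype.sum_option, Option.elim] at hmain
    have hs : -(δ * B * m) ≤ ∑ i, m * (δ * b i) * Φ (p i) := by
      have : |∑ i, m * (δ * b i) * Φ (p i)| ≤ ∑ i, m * δ * (2 * a i * |Φ (p i)|) := by
        refine (Finset.abs_sum_le_sum_abs _ _).trans (Finset.sum_le_sum fun i _ => ?_)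
        have hbi : 0 < b i := by linarith [(hbW i).1, ha i]
        rw [abs_mul, abs_of_pos (by positivity)]
        have := (hbW i).2.le
        have : b i * |Φ (p i)| ≤ 2 * a i * |Φ (p i)| := by gcongr
        calc m * (δ * b i) * |Φ (p i)| = m * δ * (b i * |Φ (p i)|) := by ring
          _ ≤ _ := by gcongr
      rw [← Finset.mul_sum, ← hB] at this
      have := (abs_le.1 this).1
      linarith
    rw [le_div_iff₀ hm0']
    set u := Φ (zpt x k) / k with hu
    have hu2 : m * ((1 - δ) / k) * Φ (zpt x k) = m * (1 - δ) * u := by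
      rw [hu]; ring
    rw [hu2] at hmain
    have h5 : δ * u ≤ δ * C := by
      have := (abs_le.1 hku).2
      gcongr
    have h6 : (m : ℝ) * (δ * u + δ * B) ≤ m * (ε / 2) := by
      gcongr; linarith
    nlinarith
  · rintro (_ | i)
    · exact hm2
    · refine (hm1 i).trans ?_
      have := (hbW i).1.le
      simp only [Option.elim]
      gcongr
  · simp only [Fintype.sum_option, Option.elim]
    have e1 : ∑ i, ((m : ℝ) * (δ * b i)) • nptToReal (p i)
        = ((m : ℝ) * δ) • ∑ i, b i • nptToReal (p i) := by
      rw [Finset.smul_sum]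
      refine Finset.sum_congr rfl fun i _ => ?_
      rw [smul_smul, mul_assoc]
    rw [e1, hbe, smul_smul, mul_assoc, mul_inv_cancel₀ hδ0.ne', mul_one, smul_sub, smul_smul,
      mul_inv_cancel₀ hm0'.ne', one_smul, smul_smul, smul_smul, div_eq_mul_inv]
    rw [mul_assoc]
    abel

/-- The (open) slice at height one. -/
def slice {d : ℕ} (Γ : Set (NPt d)) : Set (Fin d → ℝ) := {x | PosRep Γ (1, x)}

lemma slice_open {d : ℕ} (Γ : Set (NPt d)) : IsOpen (slice Γ) :=
  (isOpen_posRep Γ).preimage (by fun_prop : Continuous fun x : Fin d → ℝ => ((1 : ℝ), x))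

lemma slice_convex {d : ℕ} (Γ : Set (NPt d)) : Convex ℝ (slice Γ) := by
  rw [convex_iff_forall_pos]
  intro x hx y hy a b ha hb hab
  have := (PosRep.smul hx ha).add (PosRep.smul hy hb)
  simpa [slice, hab] using this

lemma slice_nonempty {d : ℕ} {Γ : Set (NPt d)} (h : GeneratesFullLattice Γ) :
    (slice Γ).Nonempty := by
  obtain ⟨S, hS, hgen⟩ := exists_gen h
  obtain ⟨i₀, hi₀⟩ := hgen.exists_pos
  have h0 : PosRep Γ (∑ i : S, (1 : ℝ) • nptToReal (i : NPt d)) :=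
    ⟨S, inferInstance, fun i => i, fun _ => 1, fun i => hS i.2, hgen, fun _ => one_pos, rfl⟩
  set v := ∑ i : S, (1 : ℝ) • nptToReal (i : NPt d) with hv
  have hpos : 0 < v.1 := by
    rw [hv, Prod.fst_sum]
    refine Finset.sum_pos' (fun i _ => by simp [nptToReal]) ⟨i₀, Finset.mem_univ _, ?_⟩
    simpa [nptToReal] using hi₀
  refine ⟨v.1⁻¹ • v.2, ?_⟩
  have := h0.smul (inv_pos.2 hpos)
  have e : v.1⁻¹ • v = ((1 : ℝ), v.1⁻¹ • v.2) := by
    ext <;> simp [hpos.ne']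
  rwa [e] at this

lemma mem_closure_slice {d : ℕ} {Γ : Set (NPt d)} (hne : (slice Γ).Nonempty)
    {q : NPt d} (hq : q ∈ Γ) (hq0 : 0 < q.1) :
    ((q.1 : ℝ)⁻¹ • nptToReal q).2 ∈ closure (slice Γ) := by
  obtain ⟨x₀, hx₀⟩ := hne
  have hq0' : (0 : ℝ) < q.1 := by exact_mod_cast hq0
  set y := ((q.1 : ℝ)⁻¹ • nptToReal q).2 with hy
  have hq1 : ((q.1 : ℝ)⁻¹ • nptToReal q) = (1, y) := by
    ext
    · simp [nptToReal, hq0'.ne']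
    · rfl
  have hl : Tendsto (fun t : ℝ => t • x₀ + (1 - t) • y) (nhdsWithin 0 (Set.Ioi 0)) (nhds y) := by
    have : Tendsto (fun t : ℝ => t • x₀ + (1 - t) • y) (nhds 0) (nhds ((0 : ℝ) • x₀ + (1 - (0 : ℝ)) • y)) :=
      (by fun_prop : Continuous fun t : ℝ => t • x₀ + (1 - t) • y).tendsto 0
    simp only [zero_smul, sub_zero, one_smul, zero_add] at this
    exact this.mono_left nhdsWithin_le_nhds
  refine mem_closure_of_tendsto hl ?_
  filter_upwards [Ioo_mem_nhdsGT (zero_lt_one (α := ℝ))] with t ht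
  have h1 := (PosRep.smul hx₀ ht.1).add_mem hq (s := (1 - t) * (q.1 : ℝ)⁻¹)
    (mul_pos (sub_pos.2 ht.2) (inv_pos.2 hq0'))
  rw [mul_smul, hq1] at h1
  simpa [slice] using h1

lemma not_mem_of_not_closure {d : ℕ} {Γ : Set (NPt d)} (hne : (slice Γ).Nonempty)
    {x : Fin d → ℝ} (hx : ∀ j, 0 ≤ x j) (hxc : x ∉ closure (slice Γ)) :
    ∀ᶠ k in atTop, zpt x k ∉ Γ := by
  have h1 : Tendsto (fun k : ℕ => ((k : ℝ)⁻¹ • nptToReal (zpt x k)).2) atTop (nhds x) :=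
    (continuous_snd.tendsto _).comp (zpt_tendsto hx)
  filter_upwards [h1 (isClosed_closure.isOpen_compl.mem_nhds hxc), eventually_gt_atTop 0]
    with k hk hk0 hkΓ
  exact hk (mem_closure_slice hne hkΓ hk0)

lemma slice_bdd {d : ℕ} {Γ : Set (NPt d)} {C : ℝ}
    (hC : ∀ p ∈ Γ, (∑ i, (p.2 i : ℝ)) ≤ C * p.1) {x : Fin d → ℝ} (hx : x ∈ slice Γ) (j : Fin d) :
    x j ≤ C := by
  obtain ⟨ι, _, p, a, h1, h2, h3, h4⟩ := hx
  have e1 := congrArg Prod.fst h4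
  have e2 := congrFun (congrArg Prod.snd h4) j
  rw [Prod.fst_sum] at e1
  rw [Prod.snd_sum, Finset.sum_apply] at e2
  simp only [nptToReal, Prod.smul_fst, Prod.smul_snd, Pi.smul_apply, smul_eq_mul] at e1 e2
  rw [e2, ← mul_one C, e1, Finset.mul_sum]
  refine Finset.sum_le_sum fun i _ => ?_
  have := h3 i
  have h5 : ((p i).2 j : ℝ) ≤ C * (p i).1 :=
    (Finset.single_le_sum (f := fun j => ((p i).2 j : ℝ)) (fun _ _ => by positivity)
      (Finset.mem_univ j)).trans (hC _ (h1 i))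
  calc a i * ((p i).2 j : ℝ) ≤ a i * (C * (p i).1) := by gcongr
    _ = _ := by ring

lemma piece_finite {d : ℕ} {Γ : Set (NPt d)} {C : ℝ}
    (hC : ∀ p ∈ Γ, (∑ i, (p.2 i : ℝ)) ≤ C * p.1) (k : ℕ) : (gradedPiece Γ k).Finite := by
  refine (Set.finite_Iic (fun _ : Fin d => ⌊C * k⌋₊)).subset ?_
  intro α hα j
  refine Nat.le_floor ?_
  exact (Finset.single_le_sum (f := fun j => (α j : ℝ)) (fun _ _ => by positivity)
      (Finset.mem_univ j)).trans (hC _ hα)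

/-- The half-open cell of side `1/k` at `α/k`. -/
def cell {d : ℕ} (k : ℕ) (α : Fin d → ℕ) : Set (Fin d → ℝ) :=
  Set.univ.pi fun i => Set.Ico ((α i : ℝ) / k) (((α i : ℝ) + 1) / k)

lemma cell_meas {d : ℕ} (k : ℕ) (α : Fin d → ℕ) : MeasurableSet (cell k α) :=
  MeasurableSet.univ_pi fun _ => measurableSet_Ico

lemma cell_vol {d : ℕ} (k : ℕ) (α : Fin d → ℕ) :
    volume (cell k α) = ENNReal.ofReal ((k : ℝ)⁻¹) ^ d := by
  unfold cell
  rw [Real.volume_pi_Ico]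
  have : ∀ i, ((α i : ℝ) + 1) / k - (α i : ℝ) / k = (k : ℝ)⁻¹ := fun i => by
    rw [← sub_div]; simp
  simp [this]

lemma cell_nonneg {d : ℕ} {k : ℕ} {α : Fin d → ℕ} {x : Fin d → ℝ} (hx : x ∈ cell k α)
    (j : Fin d) : 0 ≤ x j :=
  le_trans (by positivity) (hx j (Set.mem_univ j)).1

lemma mem_cell_iff {d : ℕ} {k : ℕ} (hk : 0 < k) {α : Fin d → ℕ} {x : Fin d → ℝ}
    (hx : ∀ j, 0 ≤ x j) : x ∈ cell k α ↔ α = (zpt x k).2 := by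
  have hk' : (0 : ℝ) < k := by exact_mod_cast hk
  unfold cell zpt
  rw [Set.mem_univ_pi, funext_iff]
  refine forall_congr' fun j => ?_
  rw [eq_comm, Nat.floor_eq_iff (mul_nonneg (hx j) hk'.le), Set.mem_Ico, div_le_iff₀ hk',
    lt_div_iff₀ hk']

/-- Step function associated with `w`. -/
noncomputable def stepF {d : ℕ} (S : Finset (Fin d → ℕ)) (k : ℕ) (w : (Fin d → ℕ) → ℝ)
    (x : Fin d → ℝ) : ℝ :=
  ∑ α ∈ S, (cell k α).indicator (fun _ => w α) x

lemma stepF_meas {d : ℕ} (S : Finset (Fin d → ℕ)) (k : ℕ) (w : (Fin d → ℕ) → ℝ) :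
    Measurable (stepF S k w) := by
  unfold stepF
  exact Finset.measurable_sum _ fun α _ => measurable_const.indicator (cell_meas k α)

lemma stepF_integral {d : ℕ} (S : Finset (Fin d → ℕ)) (k : ℕ) (w : (Fin d → ℕ) → ℝ) :
    ∫ x, stepF S k w x = ((k : ℝ)⁻¹) ^ d * ∑ α ∈ S, w α := by
  unfold stepF
  rw [integral_finsetSum, Finset.mul_sum]
  · refine Finset.sum_congr rfl fun α _ => ?_
    rw [integral_indicator_const _ (cell_meas k α), measureReal_def, cell_vol]
    simp [ENNReal.toReal_ofReal]
  · intro α _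
    refine (integrable_indicator_iff (cell_meas k α)).2 (integrableOn_const ?_)
    rw [cell_vol]
    exact ENNReal.pow_ne_top ENNReal.ofReal_ne_top

lemma stepF_eq {d : ℕ} (S : Finset (Fin d → ℕ)) {k : ℕ} (hk : 0 < k) (w : (Fin d → ℕ) → ℝ)
    {x : Fin d → ℝ} (hx : ∀ j, 0 ≤ x j) (hS : (zpt x k).2 ∈ S) :
    stepF S k w x = w (zpt x k).2 := by
  classical
  unfold stepF
  rw [Finset.sum_eq_single_of_mem _ hS]
  · rw [Set.indicator_of_mem ((mem_cell_iff hk hx).2 rfl)]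
  · intro β _ hβ
    exact Set.indicator_of_notMem (fun h => hβ ((mem_cell_iff hk hx).1 h)) _

lemma stepF_eq_zero {d : ℕ} (S : Finset (Fin d → ℕ)) {k : ℕ} (hk : 0 < k) (w : (Fin d → ℕ) → ℝ)
    {x : Fin d → ℝ} (hx : (∀ j, 0 ≤ x j) → (zpt x k).2 ∉ S) :
    stepF S k w x = 0 := by
  unfold stepF
  refine Finset.sum_eq_zero fun α hα => Set.indicator_of_notMem (fun h => ?_) _
  have h0 := cell_nonneg h
  exact hx h0 ((mem_cell_iff hk h0).1 h ▸ hα)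

lemma riemann {d : ℕ} {Γ : Set (NPt d)} {C : ℝ} (hC0 : 0 < C)
    (hC : ∀ p ∈ Γ, (∑ i, (p.2 i : ℝ)) ≤ C * p.1) (hne : (slice Γ).Nonempty)
    (hmem : ∀ x ∈ slice Γ, ∀ᶠ k in atTop, zpt x k ∈ Γ)
    (w : NPt d → ℝ) {B : ℝ} (hB : ∀ p, |w p| ≤ B) (G : (Fin d → ℝ) → ℝ)
    (hG : ∀ x ∈ slice Γ, Tendsto (fun k => w (zpt x k)) atTop (nhds (G x))) :
    Tendsto (fun k : ℕ => ((k : ℝ)⁻¹) ^ d *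
      ∑ α ∈ (piece_finite hC k).toFinset, w (k, α)) atTop (nhds (∫ x in slice Γ, G x)) := by
  have hS : ∀ k (x : Fin d → ℝ), (zpt x k).2 ∈ (piece_finite hC k).toFinset ↔ zpt x k ∈ Γ := by
    intro k x
    simp [gradedPiece, zpt]
  have hB0 : 0 ≤ B := (abs_nonneg _).trans (hB 0)
  rw [← integral_indicator (slice_open Γ).measurableSet]
  simp_rw [← stepF_integral]
  refine tendsto_integral_filter_of_dominated_convergence
    ((Set.Icc (fun _ => 0) (fun _ => C + 1)).indicator (fun _ => B)) ?_ ?_ ?_ ?_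
  · exact Eventually.of_forall fun k => (stepF_meas _ _ _).aestronglyMeasurable
  · filter_upwards [eventually_gt_atTop 0] with k hk
    refine Eventually.of_forall fun x => ?_
    by_cases h : (∀ j, 0 ≤ x j) ∧ zpt x k ∈ Γ
    · rw [stepF_eq _ hk _ h.1 ((hS k x).2 h.2), Set.indicator_of_mem, Real.norm_eq_abs]
      · exact hB _
      · have hk1 : (1 : ℝ) ≤ k := by exact_mod_cast hk
        refine ⟨h.1, fun j => ?_⟩
        have h1 : (⌊x j * k⌋₊ : ℝ) ≤ C * k :=
          (Finset.single_le_sum (f := fun j => ((zpt x k).2 j : ℝ)) (fun _ _ => by positivity)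
            (Finset.mem_univ j)).trans (hC _ h.2)
        have h2 := Nat.lt_floor_add_one (x j * k)
        show x j ≤ C + 1
        nlinarith
    · rw [stepF_eq_zero _ hk _ (fun h0 h1 => h ⟨h0, (hS k x).1 h1⟩), norm_zero]
      exact Set.indicator_nonneg (fun _ _ => hB0) _
  · refine (integrable_indicator_iff measurableSet_Icc).2 (integrableOn_const ?_)
    exact isCompact_Icc.measure_lt_top.ne
  · have hfr := (slice_convex Γ).addHaar_frontier (volume : Measure (Fin d → ℝ))
    have hfr' : ∀ᵐ x : Fin d → ℝ, x ∉ frontier (slice Γ) := measure_eq_zero_iff_ae_notMem.1 hfr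
    filter_upwards [hfr'] with x hx
    by_cases hxs : x ∈ slice Γ
    · rw [Set.indicator_of_mem hxs]
      refine (hG x hxs).congr' ?_
      filter_upwards [hmem x hxs, eventually_gt_atTop 0] with k hk hk0
      rw [stepF_eq _ hk0 _ (fun j => PosRep.nonneg hxs j) ((hS k x).2 hk)]
      rfl
    · rw [Set.indicator_of_notMem hxs]
      have hxc : x ∉ closure (slice Γ) := by
        intro h
        exact hx ⟨h, fun h' => hxs (interior_subset h')⟩
      refine tendsto_const_nhds.congr' ?_
      by_cases h0 : ∀ j, 0 ≤ x j
      · filter_upwards [not_mem_of_not_closure hne h0 hxc, eventually_gt_atTop 0] with k hk hk0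
        rw [stepF_eq_zero _ hk0 _ (fun _ h => hk ((hS k x).1 h))]
      · filter_upwards [eventually_gt_atTop 0] with k hk0
        rw [stepF_eq_zero _ hk0 _ (fun h => absurd h h0)]

lemma rel_integral {d : ℕ} {Γ : Set (NPt d)} {C : ℝ}
    (hC : ∀ p ∈ Γ, (∑ i, (p.2 i : ℝ)) ≤ C * p.1) (Φ Φ' : NPt d → ℝ) (k : ℕ)
    (f : BoundedContinuousFunction ℝ ℝ) :
    ∫ x, f x ∂(relEmpiricalMeasure Γ Φ Φ' k) =
      ((∑ α ∈ (piece_finite hC k).toFinset, (1 : ℝ)))⁻¹ *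
      ∑ α ∈ (piece_finite hC k).toFinset, f ((Φ' (k, α) - Φ (k, α)) / k) := by
  classical
  have hfin : Finite {α : Fin d → ℕ // (k, α) ∈ Γ} := piece_finite hC k
  have inst := Fintype.ofFinite {α : Fin d → ℕ // (k, α) ∈ Γ}
  unfold relEmpiricalMeasure
  rw [integral_smul_measure, Measure.sum_fintype, integral_finsetSum_measure]
  · simp only [integral_dirac]
    have hm : ∀ α, α ∈ (piece_finite hC k).toFinset ↔ (k, α) ∈ Γ := by simp [gradedPiece]
    rw [Finset.sum_subtype (F := inst) _ hm, Finset.sum_subtype (F := inst) _ hm]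
    simp
  · intro α _
    exact integrable_dirac (by simp)

end RelEmp

open RelEmp in
/-- For two superadditive, linearly bounded functions `Φ, Φ'` on an admissible graded
subsemigroup `Γ`, the graded pieces are eventually nonempty and the relative empirical
measures `ν_k` converge weakly to a compactly supported probability measure on `ℝ`. -/
theorem relEmpiricalMeasure_tendsto_limit
    (d : ℕ) (hd : 1 ≤ d) (Γ : Set (NPt d)) (hΓ : IsAdmissible Γ)
    (Φ Φ' : NPt d → ℝ)
    (hsuper : ∀ x ∈ Γ, ∀ y ∈ Γ, Φ x + Φ y ≤ Φ (x + y))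
    (hsuper' : ∀ x ∈ Γ, ∀ y ∈ Γ, Φ' x + Φ' y ≤ Φ' (x + y))
    (hbdd : ∃ C : ℝ, 0 < C ∧ ∀ p ∈ Γ, |Φ p| ≤ C * p.1 ∧ |Φ' p| ≤ C * p.1) :
    (∃ K₀ : ℕ, ∀ k : ℕ, K₀ ≤ k → (gradedPiece Γ k).Nonempty) ∧
    ∃ μ : Measure ℝ, IsProbabilityMeasure μ ∧
      (∃ s : Set ℝ, IsCompact s ∧ μ sᶜ = 0) ∧
      (∀ f : BoundedContinuousFunction ℝ ℝ,
        Filter.Tendsto (fun k : ℕ => ∫ x, f x ∂(relEmpiricalMeasure Γ Φ Φ' k)) Filter.atTop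
          (nhds (∫ x, f x ∂μ))) := by
  obtain ⟨hsub, ⟨R, hR0, hR⟩, hgen⟩ := hΓ
  obtain ⟨C, hC0, hC⟩ := hbdd
  have hne := slice_nonempty hgen
  have c1 := fun x (hx : x ∈ slice Γ) => core hsub hsuper hC0 (fun p hp => (hC p hp).1) hx
  have c2 := fun x (hx : x ∈ slice Γ) => core hsub hsuper' hC0 (fun p hp => (hC p hp).2) hx
  have hmem : ∀ x ∈ slice Γ, ∀ᶠ k in atTop, zpt x k ∈ Γ := fun x hx => (c1 x hx).1
  have hmeas : MeasurableSet (slice Γ) := (slice_open Γ).measurableSet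
  refine ⟨?_, ?_⟩
  · obtain ⟨x, hx⟩ := hne
    obtain ⟨K, hK⟩ := eventually_atTop.1 (hmem x hx)
    exact ⟨K, fun k hk => ⟨_, hK k hk⟩⟩
  -- the limiting function
  set h : NPt d → ℝ := fun p => (Φ' p - Φ p) / p.1 with hh
  have hlim : ∀ x, ∃ l, x ∈ slice Γ → Tendsto (fun k => h (zpt x k)) atTop (nhds l) := by
    intro x
    by_cases hx : x ∈ slice Γ
    · obtain ⟨l, hl⟩ := (c1 x hx).2
      obtain ⟨l', hl'⟩ := (c2 x hx).2
      refine ⟨l' - l, fun _ => (hl'.sub hl).congr fun k => ?_⟩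
      simp [hh, zpt, sub_div]
    · exact ⟨0, fun h => absurd h hx⟩
  choose G hG using hlim
  have hGae : AEMeasurable G (volume.restrict (slice Γ)) := by
    refine aemeasurable_of_tendsto_metrizable_ae (u := atTop)
      (f := fun k => stepF (piece_finite hR k).toFinset k (fun α => h (k, α)))
      (fun k => (stepF_meas _ _ _).aemeasurable) ?_
    refine (ae_restrict_iff' hmeas).2 (Eventually.of_forall fun x hx => ?_)
    refine (hG x hx).congr' ?_
    filter_upwards [hmem x hx, eventually_gt_atTop 0] with k hk hk0
    rw [stepF_eq _ hk0 _ (fun j => PosRep.nonneg hx j) (by simpa [gradedPiece, zpt] using hk)]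
    rfl
  have hGb : ∀ x ∈ slice Γ, G x ∈ Set.Icc (-(2 * C)) (2 * C) := by
    intro x hx
    refine isClosed_Icc.mem_of_tendsto (hG x hx) ?_
    filter_upwards [hmem x hx, eventually_gt_atTop 0] with k hk hk0
    have hk0' : (0 : ℝ) < k := by exact_mod_cast hk0
    have h1 := hC _ hk
    have a1 := abs_le.1 h1.1
    have a2 := abs_le.1 h1.2
    simp only [hh]
    have e : ((zpt x k).1 : ℝ) = k := rfl
    rw [e] at a1 a2 ⊢
    rw [Set.mem_Icc, le_div_iff₀ hk0', div_le_iff₀ hk0']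
    constructor <;> linarith [a1.1, a1.2, a2.1, a2.2]
  have hvpos : 0 < volume (slice Γ) := (slice_open Γ).measure_pos _ hne
  have hvfin : volume (slice Γ) < ⊤ := by
    refine (measure_mono ?_).trans_lt
      (isCompact_Icc (a := (fun _ : Fin d => (0 : ℝ))) (b := fun _ => R)).measure_lt_top
    exact fun x hx => ⟨fun j => PosRep.nonneg hx j, fun j => slice_bdd hR hx j⟩
  refine ⟨(volume (slice Γ))⁻¹ • Measure.map G (volume.restrict (slice Γ)), ?_, ?_, ?_⟩
  · constructor
    rw [Measure.smul_apply, Measure.map_apply_of_aemeasurable hGae MeasurableSet.univ]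
    simp [ENNReal.inv_mul_cancel hvpos.ne' hvfin.ne]
  · refine ⟨Set.Icc (-(2 * C)) (2 * C), isCompact_Icc, ?_⟩
    rw [Measure.smul_apply, Measure.map_apply_of_aemeasurable hGae measurableSet_Icc.compl]
    have : volume.restrict (slice Γ) (G ⁻¹' (Set.Icc (-(2 * C)) (2 * C))ᶜ) = 0 := by
      rw [measure_eq_zero_iff_ae_notMem]
      refine (ae_restrict_iff' hmeas).2 (Eventually.of_forall fun x hx hx' => hx' (hGb x hx))
    rw [this]; simp
  · intro f
    have t1 := riemann hR0 hR hne hmem (fun p => f (h p)) (B := ‖f‖)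
      (fun p => f.norm_coe_le_norm _) (fun x => f (G x))
      (fun x hx => (f.continuous.tendsto _).comp (hG x hx))
    have t2 := riemann hR0 hR hne hmem (fun _ => 1) (B := 1) (fun p => by simp) (fun x => 1)
      (fun x hx => tendsto_const_nhds)
    have hv : ∫ x in slice Γ, (1 : ℝ) = (volume (slice Γ)).toReal := by
      simp [measureReal_def]
    rw [hv] at t2
    have hvr : (volume (slice Γ)).toReal ≠ 0 := (ENNReal.toReal_pos hvpos.ne' hvfin.ne).ne'
    have t3 := (t2.inv₀ hvr).mul t1
    rw [integral_smul_measure, integral_map hGae f.continuous.aestronglyMeasurable,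
      ENNReal.toReal_inv, smul_eq_mul]
    refine t3.congr' ?_
    filter_upwards [eventually_gt_atTop 0] with k hk0
    have hk0' : ((k : ℝ)⁻¹) ^ d ≠ 0 := by positivity
    rw [rel_integral hR, mul_inv, mul_mul_mul_comm, inv_mul_cancel₀ hk0', one_mul]
end

section
/- Let K be a non-Archimedean field, V a K-vector space of finite dimension d, and N, N' two non-Archimedean norms on V. Let N^{∧d} (resp. N'^{∧d}) denote the norm on the one-dimensional top exterior power Λ^d V obtained as the quotient norm of the d-fold tensor power norm N^{⊗d} (resp. N'^{⊗d}) along the canonical surjection V^{⊗d} → Λ^d V. Then for every nonzero ω ∈ Λ^d V, vol(N,N') = (1/d)·(log N'^{∧d}(ω) − log N^{∧d}(ω)). -/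
open scoped BigOperators

/-- A non-Archimedean norm on a `K`-vector space `V`. -/
def IsNAnorm (K : Type*) {V : Type*} [NormedField K] [AddCommGroup V] [Module K V]
    (N : V → ℝ) : Prop :=
  (∀ v, 0 ≤ N v) ∧ (∀ v, N v = 0 ↔ v = 0) ∧
  (∀ (a : K) (v : V), N (a • v) = ‖a‖ * N v) ∧
  (∀ v w : V, N (v + w) ≤ max (N v) (N w))

/-- The sup-distance `d_∞` between two norms on `V`. -/
noncomputable def dInfty {V : Type*} [AddCommGroup V] (N N' : V → ℝ) : ℝ :=
  sSup {r | ∃ v : V, v ≠ 0 ∧ r = |Real.log (N' v) - Real.log (N v)|}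

/-- The `i`-th relative spectral value `λᵢ(N, N')`:
the supremum, over subspaces `W ⊆ V` with `dim W ≥ i`, of
`inf_{w ∈ W ∖ {0}} (log N'(w) − log N(w))`. -/
noncomputable def specVal (K : Type*) {V : Type*} [Field K] [AddCommGroup V] [Module K V]
    (N N' : V → ℝ) (i : ℕ) : ℝ :=
  sSup {r | ∃ W : Submodule K V, i ≤ Module.finrank K W ∧
    r = sInf {s | ∃ w ∈ W, w ≠ (0 : V) ∧ s = Real.log (N' w) - Real.log (N w)}}

/-- The relative volume `vol(N, N') = (1/d)·Σ_{i=1}^d λᵢ(N, N')`, where `d = dim V`. -/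
noncomputable def relVol (K : Type*) (V : Type*) [Field K] [AddCommGroup V] [Module K V]
    (N N' : V → ℝ) : ℝ :=
  (Module.finrank K V : ℝ)⁻¹ *
    ∑ i ∈ Finset.range (Module.finrank K V), specVal K N N' (i + 1)

open scoped TensorProduct

/-- The quotient norm induced by a norm `N` on `V` along a linear map `π`. -/
noncomputable def quotNorm {K V W : Type*} [Field K] [AddCommGroup V] [Module K V]
    [AddCommGroup W] [Module K W] (π : V →ₗ[K] W) (N : V → ℝ) (x : W) : ℝ :=
  sInf {r | ∃ v : V, π v = x ∧ r = N v}

/-- The `m`-fold tensor power norm `N^{⊗m}` on `V^{⊗m}`. -/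
noncomputable def tensorPowNorm (K : Type*) {V : Type*} [NormedField K] [AddCommGroup V]
    [Module K V] (N : V → ℝ) (m : ℕ) (t : ⨂[K]^m V) : ℝ :=
  sInf {r | ∃ (n : ℕ) (v : Fin (n + 1) → Fin m → V),
    t = ∑ i, PiTensorProduct.tprod K (v i) ∧
    r = Finset.univ.sup' Finset.univ_nonempty fun i => ∏ j, N (v i j)}

/-- The canonical surjection `V^{⊗d} → Λ^d V`. -/
noncomputable def tensorToExteriorPower (K V : Type*) [Field K] [AddCommGroup V] [Module K V]
    (d : ℕ) : (⨂[K]^d V) →ₗ[K] ⋀[K]^d V :=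
  LinearMap.codRestrict (⋀[K]^d V)
    (PiTensorProduct.lift (ExteriorAlgebra.ιMulti K d).toMultilinearMap)
    (by
      intro t
      induction t using PiTensorProduct.induction_on with
      | smul_tprod c v =>
        rw [map_smul]
        refine Submodule.smul_mem _ _ ?_
        rw [PiTensorProduct.lift.tprod]
        exact ExteriorAlgebra.ιMulti_range K d ⟨v, rfl⟩
      | add x y hx hy =>
        rw [map_add]
        exact Submodule.add_mem _ hx hy)

open Filter Topology

namespace RelVolAux

universe u v

section basic
variable {K : Type u} {V : Type v} [NormedField K] [AddCommGroup V] [Module K V] {N : V → ℝ}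

lemma nn (h : IsNAnorm K N) (v : V) : 0 ≤ N v := h.1 v

lemma pos (h : IsNAnorm K N) {v : V} (hv : v ≠ 0) : 0 < N v :=
  lt_of_le_of_ne (h.1 v) (fun e => hv ((h.2.1 v).1 e.symm))

lemma zero (h : IsNAnorm K N) : N 0 = 0 := (h.2.1 0).2 rfl

lemma smul (h : IsNAnorm K N) (a : K) (v : V) : N (a • v) = ‖a‖ * N v := h.2.2.1 a v

lemma add_le (h : IsNAnorm K N) (v w : V) : N (v + w) ≤ max (N v) (N w) := h.2.2.2 v w

lemma neg (h : IsNAnorm K N) (v : V) : N (-v) = N v := by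
  have := smul h (-1 : K) v
  simpa using this

lemma sub_le (h : IsNAnorm K N) (v w : V) : N (v - w) ≤ max (N v) (N w) := by
  have := add_le h v (-w)
  rwa [neg h, ← sub_eq_add_neg] at this

lemma sub_comm' (h : IsNAnorm K N) (v w : V) : N (v - w) = N (w - v) := by
  rw [← neg h, neg_sub]

lemma sum_le {ι : Type*} (h : IsNAnorm K N) (s : Finset ι) (f : ι → V) (B : ℝ) (hB : 0 ≤ B)
    (hf : ∀ i ∈ s, N (f i) ≤ B) : N (∑ i ∈ s, f i) ≤ B := by
  classical
  induction s using Finset.induction_on with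
  | empty => simpa [zero h] using hB
  | insert a s ha ih =>
    rw [Finset.sum_insert ha]
    refine (add_le h _ _).trans (max_le (hf a (by simp)) (ih ?_))
    intro i hi
    exact hf i (by simp [hi])

lemma sum_le_sum {ι : Type*} (h : IsNAnorm K N) (s : Finset ι) (f : ι → V) :
    N (∑ i ∈ s, f i) ≤ ∑ i ∈ s, N (f i) :=
  sum_le h s f _ (Finset.sum_nonneg fun _ _ => nn h _)
    (fun _ hi => Finset.single_le_sum (f := fun i => N (f i)) (fun _ _ => nn h _) hi)

lemma restrict (h : IsNAnorm K N) (U : Submodule K V) :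
    IsNAnorm K (fun u : U => N (u : V)) := by
  refine ⟨fun v => h.1 _, fun v => ?_, fun a v => ?_, fun v w => ?_⟩
  · rw [h.2.1]; simp
  · exact h.2.2.1 _ _
  · exact h.2.2.2 _ _

end basic

lemma sqrt_split {C : ℝ} (hC : 1 < C) : ∃ c : ℝ, 1 < c ∧ c * c = C :=
  ⟨√C, by rw [Real.lt_sqrt] <;> linarith, Real.mul_self_sqrt (by linarith)⟩

/-- Every linear functional on a finite-dimensional normed space is bounded. -/
lemma bdd_functional {K : Type u} [NormedField K] [CompleteSpace K] (n : ℕ) :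
    ∀ (V : Type v) [AddCommGroup V] [Module K V] [FiniteDimensional K V] (N : V → ℝ),
      IsNAnorm K N → Module.finrank K V = n → ∀ φ : V →ₗ[K] K,
      ∃ M : ℝ, 0 < M ∧ ∀ x, ‖φ x‖ ≤ M * N x := by
  induction n with
  | zero =>
    intro V _ _ _ N hN hn φ
    refine ⟨1, one_pos, fun x => ?_⟩
    have : Subsingleton V := Module.finrank_zero_iff.1 hn
    rw [Subsingleton.elim x 0]; simp [zero hN]
  | succ n ih =>
    intro V _ _ _ N hN hn φ
    by_cases hφ : φ = 0
    · exact ⟨1, one_pos, fun x => by simp [hφ, nn hN]⟩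
    obtain ⟨x, hx⟩ : ∃ x, φ x = 1 := LinearMap.surjective hφ 1
    have hfr : Module.finrank K (LinearMap.ker φ) = n := by
      have := Module.Dual.finrank_ker_add_one_of_ne_zero (f := φ) hφ
      omega
    have hU := restrict hN (LinearMap.ker φ)
    suffices hr : ∃ r : ℝ, 0 < r ∧ ∀ u : LinearMap.ker φ, r ≤ N (x - u) by
      obtain ⟨r, hr, hru⟩ := hr
      refine ⟨r⁻¹, inv_pos.2 hr, fun y => ?_⟩
      by_cases hy : φ y = 0
      · rw [hy, norm_zero]; exact mul_nonneg (inv_pos.2 hr).le (nn hN _)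
      have hmem : x - (φ y)⁻¹ • y ∈ LinearMap.ker φ := by
        simp [hx, hy]
      have h1 := hru ⟨_, hmem⟩
      simp only [sub_sub_cancel] at h1
      rw [smul hN, norm_inv] at h1
      have hp : 0 < ‖φ y‖ := norm_pos_iff.2 hy
      rw [le_inv_mul_iff₀ hr]
      rw [le_inv_mul_iff₀ hp] at h1
      linarith
    by_contra hcon
    push Not at hcon
    have hseq : ∀ k : ℕ, ∃ u : LinearMap.ker φ, N (x - u) < 1 / ((k : ℝ) + 1) :=
      fun k => hcon _ (by positivity)
    choose s hs using hseq
    let b := Module.finBasis K (LinearMap.ker φ)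
    have hbd := fun i => ih (LinearMap.ker φ) _ hU hfr (b.coord i)
    choose M hM0 hM using hbd
    have hcau : ∀ i, CauchySeq (fun k => b.coord i (s k)) := by
      intro i
      refine cauchySeq_of_le_tendsto_0 (fun k => M i * (1 / ((k : ℝ) + 1))) ?_ ?_
      · intro k l m hk hl
        rw [dist_eq_norm, ← map_sub]
        refine (hM i _).trans (mul_le_mul_of_nonneg_left ?_ (hM0 i).le)
        have e : ((s k - s l : LinearMap.ker φ) : V) = (x - s l) - (x - s k) := by
          simp
        have hk' : 1 / ((k : ℝ) + 1) ≤ 1 / ((m : ℝ) + 1) := by gcongr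
        have hl' : 1 / ((l : ℝ) + 1) ≤ 1 / ((m : ℝ) + 1) := by gcongr
        show N ((s k - s l : LinearMap.ker φ) : V) ≤ _
        rw [e]
        exact (sub_le hN _ _).trans (max_le ((hs l).le.trans hl') ((hs k).le.trans hk'))
      · simpa using (tendsto_one_div_add_atTop_nhds_zero_nat (𝕜 := ℝ)).const_mul (M i)
    have hlim := fun i => cauchySeq_tendsto_of_complete (hcau i)
    choose a ha using hlim
    let w : LinearMap.ker φ := ∑ i, a i • b i
    have hbound : ∀ k : ℕ, N (x - w) ≤
        1 / ((k : ℝ) + 1) + ∑ i, ‖b.coord i (s k) - a i‖ * N (b i) := by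
      intro k
      have e : (x - w : V) = (x - s k) + ((s k - w : LinearMap.ker φ) : V) := by simp
      have e2 : s k - w = ∑ i, (b.coord i (s k) - a i) • b i := by
        simp only [sub_smul, Finset.sum_sub_distrib, w]
        congr 1
        exact (b.sum_repr (s k)).symm
      have h3 : N ((s k - w : LinearMap.ker φ) : V) ≤
          ∑ i, ‖b.coord i (s k) - a i‖ * N (b i) := by
        rw [e2]
        refine (sum_le_sum hU _ _).trans (le_of_eq ?_)
        refine Finset.sum_congr rfl fun i _ => ?_
        exact smul hU _ _
      rw [e]
      refine (add_le hN _ _).trans (max_le ?_ ?_)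
      · have := (nn hN ((s k - w : LinearMap.ker φ) : V)).trans h3
        linarith [hs k]
      · have : 0 ≤ 1 / ((k : ℝ) + 1) := by positivity
        linarith
    have htend : Tendsto (fun k : ℕ =>
        1 / ((k : ℝ) + 1) + ∑ i, ‖b.coord i (s k) - a i‖ * N (b i)) atTop (𝓝 0) := by
      have h0 : Tendsto (fun k : ℕ => ∑ i, ‖b.coord i (s k) - a i‖ * N (b i))
          atTop (𝓝 (∑ i, 0 * N (b i))) := by
        refine tendsto_finsetSum _ fun i _ => Tendsto.mul_const _ ?_
        exact tendsto_iff_norm_sub_tendsto_zero.1 (ha i)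
      simpa using (tendsto_one_div_add_atTop_nhds_zero_nat (𝕜 := ℝ)).add h0
    have hle : N (x - w) ≤ 0 := ge_of_tendsto' htend hbound
    have h0 : x - w = 0 := (hN.2.1 _).1 (le_antisymm hle (nn hN _))
    have hxw : φ x = 0 := by
      rw [sub_eq_zero.1 h0]; exact w.2
    rw [hx] at hxw
    exact one_ne_zero hxw

/-- For a nonzero functional there is an almost-orthogonal vector to its kernel. -/
lemma exists_vector {K : Type u} [NormedField K] [CompleteSpace K]
    {V : Type v} [AddCommGroup V] [Module K V] [FiniteDimensional K V] {N : V → ℝ}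
    (hN : IsNAnorm K N) {C : ℝ} (hC : 1 < C) (ψ : V →ₗ[K] K) (hψ : ψ ≠ 0) :
    ∃ x, ψ x = 1 ∧ ∀ y, ‖ψ y‖ * N x ≤ C * N y := by
  obtain ⟨M, hM0, hM⟩ := bdd_functional _ V N hN rfl ψ
  let S : Set ℝ := {r | ∃ x, ψ x = 1 ∧ r = N x}
  obtain ⟨x1, hx1⟩ : ∃ x, ψ x = 1 := LinearMap.surjective hψ 1
  have hne : S.Nonempty := ⟨_, x1, hx1, rfl⟩
  have hlow : ∀ r ∈ S, M⁻¹ ≤ r := by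
    rintro r ⟨x, hx, rfl⟩
    have := hM x
    rw [hx, norm_one] at this
    rw [inv_le_iff_one_le_mul₀ hM0]; linarith
  have hbb : BddBelow S := ⟨_, hlow⟩
  have hpos : 0 < sInf S := lt_of_lt_of_le (inv_pos.2 hM0) (le_csInf hne hlow)
  obtain ⟨r, ⟨x, hx, rfl⟩, hr⟩ := exists_lt_of_csInf_lt hne
    (show sInf S < C * sInf S by nlinarith)
  refine ⟨x, hx, fun y => ?_⟩
  by_cases hy : ψ y = 0
  · rw [hy, norm_zero, zero_mul]; exact mul_nonneg (by linarith) (nn hN _)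
  have hp : 0 < ‖ψ y‖ := norm_pos_iff.2 hy
  have h1 : sInf S ≤ N ((ψ y)⁻¹ • y) := csInf_le hbb ⟨_, by simp [hy], rfl⟩
  rw [smul hN, norm_inv, le_inv_mul_iff₀ hp] at h1
  nlinarith

/-- Approximate Hahn-Banach. -/
lemma hahn_banach {K : Type u} [NormedField K] [CompleteSpace K] (n : ℕ) :
    ∀ (V : Type v) [AddCommGroup V] [Module K V] [FiniteDimensional K V] (N : V → ℝ),
      IsNAnorm K N → Module.finrank K V = n → ∀ (C : ℝ), 1 < C → ∀ v : V, v ≠ 0 →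
      ∃ φ : V →ₗ[K] K, φ v = 1 ∧ ∀ x, ‖φ x‖ * N v ≤ C * N x := by
  induction n with
  | zero =>
    intro V _ _ _ N hN hn C hC v hv
    have : Subsingleton V := Module.finrank_zero_iff.1 hn
    exact absurd (Subsingleton.elim v 0) hv
  | succ n ih =>
    intro V _ _ _ N hN hn C hC v hv
    by_cases htop : Submodule.span K {v} = ⊤
    · obtain ⟨φ0, hφ0⟩ := (show ∃ φ : V →ₗ[K] K, φ v ≠ 0 by
          by_contra hc
          push Not at hc
          exact hv ((Module.forall_dual_apply_eq_zero_iff K v).1 hc))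
      refine ⟨(φ0 v)⁻¹ • φ0, by simp [hφ0], fun x => ?_⟩
      obtain ⟨a, rfl⟩ := Submodule.mem_span_singleton.1 (htop ▸ Submodule.mem_top : x ∈ Submodule.span K {v})
      rw [smul hN]
      simp only [LinearMap.smul_apply, map_smul, smul_eq_mul]
      rw [inv_mul_cancel₀ hφ0, mul_one]
      have : 0 ≤ ‖a‖ * N v := mul_nonneg (norm_nonneg _) (nn hN _)
      nlinarith
    obtain ⟨ψ, hψ, hψv⟩ : ∃ ψ : V →ₗ[K] K, ψ ≠ 0 ∧ Submodule.map ψ (Submodule.span K {v}) = ⊥ :=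
      Submodule.exists_dual_map_eq_bot_of_lt_top
      (lt_top_iff_ne_top.2 htop) inferInstance
    have hψv : ψ v = 0 := by
      have : ψ v ∈ Submodule.map ψ (Submodule.span K {v}) :=
        Submodule.mem_map_of_mem (Submodule.mem_span_singleton_self v)
      rw [hψv] at this
      simpa using this
    have hfr : Module.finrank K (LinearMap.ker ψ) = n := by
      have := Module.Dual.finrank_ker_add_one_of_ne_zero (f := ψ) hψ
      omega
    obtain ⟨c, hc, hcC⟩ := sqrt_split hC
    obtain ⟨x0, hx0, hx0'⟩ := exists_vector hN hc ψ hψ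
    obtain ⟨φ, hφ, hφ'⟩ := ih (LinearMap.ker ψ) _ (restrict hN _) hfr c hc ⟨v, hψv⟩
      (fun h => hv (congrArg Subtype.val h))
    let p : V →ₗ[K] LinearMap.ker ψ :=
      LinearMap.codRestrict _ (LinearMap.id - ψ.smulRight x0) (fun y => by simp [hx0])
    refine ⟨φ ∘ₗ p, ?_, fun y => ?_⟩
    · rw [LinearMap.comp_apply, ← hφ]
      congr 1
      apply Subtype.ext
      change v - ψ v • x0 = v
      simp [hψv]
    · have h1 := hφ' (p y)
      have h2 : N (p y : V) ≤ c * N y := by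
        have : (p y : V) = y - ψ y • x0 := rfl
        rw [this]
        refine (sub_le hN _ _).trans (max_le ?_ ?_)
        · nlinarith [nn hN y]
        · rw [smul hN]; exact hx0' y
      simp only [LinearMap.comp_apply]
      rw [← hcC, mul_assoc]
      exact h1.trans (mul_le_mul_of_nonneg_left h2 (by linarith))

lemma norm_le_mul {K : Type u} [NormedField K] [CompleteSpace K]
    {V : Type v} [AddCommGroup V] [Module K V] [FiniteDimensional K V] {N N' : V → ℝ}
    (hN : IsNAnorm K N) (hN' : IsNAnorm K N') : ∃ M : ℝ, ∀ x, N x ≤ M * N' x := by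
  let b := Module.finBasis K V
  have hbd := fun i => bdd_functional _ V _ hN' rfl (b.coord i)
  choose M hM0 hM using hbd
  refine ⟨∑ i, M i * N (b i), fun x => ?_⟩
  calc N x = N (∑ i, b.repr x i • b i) := by rw [b.sum_repr]
    _ ≤ ∑ i, N (b.repr x i • b i) := sum_le_sum hN _ _
    _ ≤ ∑ i, (M i * N (b i)) * N' x := by
      refine Finset.sum_le_sum fun i _ => ?_
      rw [smul hN]
      have := mul_le_mul_of_nonneg_right (hM i x) (nn hN (b i))
      simp only [Module.Basis.coord_apply] at this
      linarith
    _ = _ := by rw [Finset.sum_mul]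

/-- `b` is `C`-orthogonal for `N`. -/
def Orth {K : Type u} {V : Type v} [NormedField K] [AddCommGroup V] [Module K V] {n : ℕ}
    (N : V → ℝ) (b : Module.Basis (Fin n) K V) (C : ℝ) : Prop :=
  ∀ x i, ‖b.repr x i‖ * N (b i) ≤ C * N x

lemma cons_aux {K : Type u} [NormedField K] 
    {V : Type v} [AddCommGroup V] [Module K V] {n : ℕ} {N : V → ℝ} (hN : IsNAnorm K N)
    {c C : ℝ} (hc : 1 < c) (hcC : c * c = C) (φ : V →ₗ[K] K) (v : V)
    (hφ : ∀ x, ‖φ x‖ * N v ≤ c * N x)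
    (bH : Module.Basis (Fin n) K (LinearMap.ker φ))
    (hb : Orth (fun u : LinearMap.ker φ => N (u : V)) bH c)
    (b : Module.Basis (Fin (n + 1)) K V)
    (hbc : ⇑b = Fin.cons v (Subtype.val ∘ ⇑bH)) (hv : φ v = 1) : Orth N b C := by
  intro x
  have hmem : x - φ x • v ∈ LinearMap.ker φ := by simp [hv]
  have hh : N (x - φ x • v) ≤ c * N x := by
    refine (sub_le hN _ _).trans (max_le ?_ ?_)
    · nlinarith [nn hN x]
    · rw [smul hN]; exact hφ x
  have hrep : b.equivFun x = Fin.cons (φ x) (fun i => bH.repr ⟨_, hmem⟩ i) := by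
    rw [← LinearEquiv.eq_symm_apply, Module.Basis.equivFun_symm_apply, Fin.sum_univ_succ]
    simp only [hbc, Fin.cons_zero, Fin.cons_succ, Function.comp]
    have := congrArg (Subtype.val) (bH.sum_repr ⟨_, hmem⟩)
    simp only [Submodule.coe_sum, Submodule.coe_smul] at this
    rw [this]; simp
  intro i
  rw [← Module.Basis.equivFun_apply, hrep, hbc]
  have hx := nn hN x
  refine Fin.cases ?_ (fun i => ?_) i
  · simp only [Fin.cons_zero]
    refine (hφ x).trans (mul_le_mul_of_nonneg_right ?_ hx)
    nlinarith
  · simp only [Fin.cons_succ, Function.comp]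
    refine (hb ⟨_, hmem⟩ i).trans ?_
    rw [← hcC, mul_assoc]
    exact mul_le_mul_of_nonneg_left hh (by linarith)

/-- Approximate simultaneous diagonalization of two norms. -/
lemma simul {K : Type u} [NormedField K] [CompleteSpace K] (n : ℕ) :
    ∀ (V : Type v) [AddCommGroup V] [Module K V] [FiniteDimensional K V] (N N' : V → ℝ),
      IsNAnorm K N → IsNAnorm K N' → Module.finrank K V = n → ∀ (C : ℝ), 1 < C →
      ∃ b : Module.Basis (Fin n) K V, Orth N b C ∧ Orth N' b C := by
  induction n with
  | zero =>
    intro V _ _ _ N N' hN hN' hn C hC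
    exact ⟨Module.finBasisOfFinrankEq K V hn, fun x i => i.elim0, fun x i => i.elim0⟩
  | succ n ih =>
    intro V _ _ _ N N' hN hN' hn C hC
    obtain ⟨c, hc, hcC⟩ := sqrt_split hC
    obtain ⟨e, he, hec⟩ := sqrt_split hc
    obtain ⟨M, hM⟩ := norm_le_mul hN hN'
    have hnt : Nontrivial V := Module.nontrivial_of_finrank_pos (R := K) (by omega)
    obtain ⟨v0, hv0⟩ := exists_ne (0 : V)
    let S : Set ℝ := {r | ∃ x : V, x ≠ 0 ∧ r = N x / N' x}
    have hne : S.Nonempty := ⟨_, v0, hv0, rfl⟩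
    have hba : BddAbove S := by
      refine ⟨M, ?_⟩
      rintro r ⟨x, hx, rfl⟩
      rw [div_le_iff₀ (pos hN' hx)]; exact hM x
    have hSpos : 0 < sSup S :=
      lt_of_lt_of_le (div_pos (pos hN hv0) (pos hN' hv0)) (le_csSup hba ⟨_, hv0, rfl⟩)
    obtain ⟨r, ⟨v, hv, rfl⟩, hr⟩ := exists_lt_of_lt_csSup hne
      (show sSup S / e < sSup S from div_lt_self hSpos he)
    have hvmax : ∀ x, N x * N' v ≤ e * (N v * N' x) := by
      intro x
      by_cases hx : x = 0
      · simp [hx, zero hN, zero hN']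
      have h1 : N x / N' x ≤ sSup S := le_csSup hba ⟨_, hx, rfl⟩
      rw [div_lt_iff₀ (by linarith)] at hr
      have h2 := h1.trans hr.le
      rw [div_mul_eq_mul_div, div_le_div_iff₀ (pos hN' hx) (pos hN' hv)] at h2
      linarith
    obtain ⟨φ, hφv, hφ⟩ := hahn_banach _ V N hN hn e he v hv
    have hφc : ∀ x, ‖φ x‖ * N v ≤ c * N x := fun x =>
      (hφ x).trans (mul_le_mul_of_nonneg_right (by nlinarith) (nn hN x))
    have hφc' : ∀ x, ‖φ x‖ * N' v ≤ c * N' x := by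
      intro x
      have hp := pos hN hv
      refine le_of_mul_le_mul_right ?_ hp
      have h1 := mul_le_mul_of_nonneg_right (hφ x) (nn hN' v)
      have h2 := mul_le_mul_of_nonneg_left (hvmax x) (show 0 ≤ e by linarith)
      rw [← hec]
      nlinarith
    have hφ0 : φ ≠ 0 := by
      rintro rfl; simp at hφv
    have hfr : Module.finrank K (LinearMap.ker φ) = n := by
      have := Module.Dual.finrank_ker_add_one_of_ne_zero (f := φ) hφ0
      omega
    obtain ⟨bH, h1, h2⟩ := ih (LinearMap.ker φ) _ _ (restrict hN _) (restrict hN' _) hfr c hc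
    let b := Module.Basis.mkFinCons v bH
      (fun a x hx hax => by
        have := congrArg φ hax
        rw [map_add, map_smul, hφv, LinearMap.mem_ker.1 hx] at this
        simpa using this)
      (fun z => ⟨-φ z, by simp [hφv]⟩)
    have hbc : ⇑b = Fin.cons v (Subtype.val ∘ ⇑bH) := Module.Basis.coe_mkFinCons _ _ _ _
    exact ⟨b, cons_aux hN hc hcC φ v hφc bH h1 b hbc hφv,
      cons_aux hN' hc hcC φ v hφc' bH h2 b hbc hφv⟩

section spec
variable {K : Type u} {V : Type v} [NormedField K] [AddCommGroup V] [Module K V]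
  {N N' : V → ℝ} {d : ℕ}

lemma ratio_le (hN : IsNAnorm K N) (hN' : IsNAnorm K N') (b : Module.Basis (Fin d) K V)
    {C : ℝ} (hC : 1 < C) (hb : Orth N b C) (τ : ℝ) (x : V) (hx : x ≠ 0)
    (hτ : ∀ j, b.repr x j ≠ 0 → Real.log (N' (b j)) - Real.log (N (b j)) ≤ τ) :
    Real.log (N' x) - Real.log (N x) ≤ τ + Real.log C := by
  have hpx := pos hN hx
  have hpx' := pos hN' hx
  have key : N' x ≤ Real.exp τ * (C * N x) := by
    have hnn : 0 ≤ Real.exp τ * (C * N x) := by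
      have := Real.exp_pos τ
      positivity
    calc N' x = N' (∑ i, b.repr x i • b i) := by rw [b.sum_repr]
      _ ≤ _ := by
        refine sum_le hN' _ _ _ hnn fun i _ => ?_
        rw [smul hN']
        by_cases h0 : b.repr x i = 0
        · rw [h0, norm_zero, zero_mul]; exact hnn
        have h1 := hτ i h0
        have hp := pos hN (b.ne_zero i)
        have hp' := pos hN' (b.ne_zero i)
        rw [← Real.log_div hp'.ne' hp.ne', Real.log_le_iff_le_exp (div_pos hp' hp),
          div_le_iff₀ hp] at h1
        have h2 := mul_le_mul_of_nonneg_left h1 (norm_nonneg (b.repr x i))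
        have h3 := mul_le_mul_of_nonneg_left (hb x i) (Real.exp_pos τ).le
        linarith
  have hl := Real.log_le_log hpx' key
  rw [Real.log_mul (Real.exp_pos τ).ne' (by positivity), Real.log_exp,
    Real.log_mul (by positivity) hpx.ne'] at hl
  linarith

lemma finrank_span_image (b : Module.Basis (Fin d) K V) (s : Set (Fin d)) :
    Module.finrank K (Submodule.span K (b '' s)) = Nat.card s := by
  classical
  rw [Set.image_eq_range, Nat.card_eq_fintype_card]
  exact finrank_span_eq_card (b.linearIndependent.comp _ Subtype.val_injective)

lemma specVal_bound [FiniteDimensional K V] (hN : IsNAnorm K N) (hN' : IsNAnorm K N')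
    (hd : Module.finrank K V = d)
    (b : Module.Basis (Fin d) K V)
    {C : ℝ} (hC : 1 < C) (hb : Orth N b C) (hb' : Orth N' b C)
    (hanti : Antitone fun j => Real.log (N' (b j)) - Real.log (N (b j))) (i : Fin d) :
    |specVal K N N' (i + 1) - (Real.log (N' (b i)) - Real.log (N (b i)))| ≤ Real.log C := by
  set t : Fin d → ℝ := fun j => Real.log (N' (b j)) - Real.log (N (b j)) with ht
  have hbelow : ∀ W : Submodule K V,
      BddBelow {s | ∃ w ∈ W, w ≠ (0 : V) ∧ s = Real.log (N' w) - Real.log (N w)} := by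
    intro W
    refine ⟨-(∑ j, |t j|) - Real.log C, ?_⟩
    rintro s ⟨w, -, hw, rfl⟩
    have := ratio_le hN' hN b hC hb' (∑ j, |t j|) w hw (fun j _ => by
      have h1 := Finset.single_le_sum (f := fun j => |t j|) (fun j _ => abs_nonneg _)
        (Finset.mem_univ j)
      have h2 := neg_abs_le (t j)
      simp only [ht] at h1 h2 ⊢
      linarith)
    linarith
  have hup : ∀ r ∈ {r | ∃ W : Submodule K V, (i : ℕ) + 1 ≤ Module.finrank K W ∧
      r = sInf {s | ∃ w ∈ W, w ≠ (0 : V) ∧ s = Real.log (N' w) - Real.log (N w)}},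
      r ≤ t i + Real.log C := by
    rintro r ⟨W, hW, rfl⟩
    set U := Submodule.span K (b '' Set.Ici i) with hU
    have hUf : Module.finrank K U = d - i := by
      rw [hU, finrank_span_image]; simp
    have h1 := Submodule.finrank_sup_add_finrank_inf_eq W U
    have h2 := Submodule.finrank_le (W ⊔ U)
    have hi := i.2
    have h3 : W ⊓ U ≠ ⊥ := by
      intro h
      rw [h, finrank_bot] at h1
      omega
    obtain ⟨w, hw, hw0⟩ := Submodule.exists_mem_ne_zero_of_ne_bot h3
    refine (csInf_le (hbelow W) ⟨w, hw.1, hw0, rfl⟩).trans ?_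
    refine ratio_le hN hN' b hC hb _ w hw0 fun j hj => hanti ?_
    have := b.mem_span_image.1 hw.2
    exact this (Finsupp.mem_support_iff.2 hj)
  have hlow : t i - Real.log C ≤ specVal K N N' (i + 1) := by
    set U := Submodule.span K (b '' Set.Iic i) with hU
    have hUf : Module.finrank K U = i + 1 := by
      rw [hU, finrank_span_image]; simp
    refine le_csSup_of_le ⟨_, hup⟩ ⟨U, hUf.ge, rfl⟩ ?_
    refine le_csInf ⟨_, b i, Submodule.subset_span ⟨i, by simp, rfl⟩, b.ne_zero i, rfl⟩ ?_
    rintro s ⟨w, hw, hw0, rfl⟩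
    have := ratio_le hN' hN b hC hb' (- t i) w hw0 (fun j hj => by
      have h1 := b.mem_span_image.1 hw (Finsupp.mem_support_iff.2 hj)
      have h2 := hanti h1
      simp only [ht] at h2 ⊢
      linarith)
    linarith
  have hupp : specVal K N N' (i + 1) ≤ t i + Real.log C :=
    csSup_le ⟨_, ⊤, by rw [finrank_top, hd]; exact i.2, rfl⟩ hup
  rw [abs_le]
  constructor <;> simp only [ht] at * <;> linarith

lemma exists_sorted (b : Module.Basis (Fin d) K V) {C : ℝ} (hb : Orth N b C) (hb' : Orth N' b C) :
    ∃ b : Module.Basis (Fin d) K V, Orth N b C ∧ Orth N' b C ∧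
      Antitone fun j => Real.log (N' (b j)) - Real.log (N (b j)) := by
  let f : Fin d → ℝ := fun j => -(Real.log (N' (b j)) - Real.log (N (b j)))
  refine ⟨b.reindex (Tuple.sort f).symm, fun x i => ?_, fun x i => ?_, fun i j hij => ?_⟩
  · simpa using hb x (Tuple.sort f i)
  · simpa using hb' x (Tuple.sort f i)
  · have := Tuple.monotone_sort f hij
    simp only [f, Function.comp] at this
    simp only [Module.Basis.reindex_apply, Equiv.symm_symm]
    exact neg_le_neg_iff.1 this

end spec

section det
variable {K : Type u} {V : Type v} [NormedField K] [AddCommGroup V] [Module K V]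
  {N : V → ℝ} {d : ℕ}

lemma toExt_tprod (v : Fin d → V) :
    tensorToExteriorPower K V d (PiTensorProduct.tprod K v) = exteriorPower.ιMulti K d v := by
  apply Subtype.ext
  simp [tensorToExteriorPower]

/-- the coordinate on the top exterior power -/
noncomputable def detCoord (b : Module.Basis (Fin d) K V) : ⋀[K]^d V →ₗ[K] K :=
  exteriorPower.alternatingMapLinearEquiv b.det

lemma detCoord_ιMulti (b : Module.Basis (Fin d) K V) (v : Fin d → V) :
    detCoord b (exteriorPower.ιMulti K d v) = b.det v :=
  exteriorPower.alternatingMapLinearEquiv_apply_ιMulti _ _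

lemma eq_detCoord_smul (b : Module.Basis (Fin d) K V) (ω : ⋀[K]^d V) :
    ω = detCoord b ω • exteriorPower.ιMulti K d b := by
  have : (LinearMap.id : ⋀[K]^d V →ₗ[K] ⋀[K]^d V) =
      (detCoord b).smulRight (exteriorPower.ιMulti K d b) := by
    apply exteriorPower.linearMap_ext
    refine b.ext_alternating fun σ hσ => ?_
    simp only [LinearMap.compAlternatingMap_apply, LinearMap.id_apply, LinearMap.smulRight_apply]
    rw [detCoord_ιMulti]
    let e : Equiv.Perm (Fin d) := Equiv.ofBijective σ (Finite.injective_iff_bijective.1 hσ)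
    have e1 : (fun i => b (σ i)) = b ∘ e := rfl
    rw [e1, AlternatingMap.map_perm, AlternatingMap.map_perm, b.det_self]
    rcases Int.units_eq_one_or (Equiv.Perm.sign e) with h | h <;> simp [h]
  exact congrArg (fun f => f ω) this

lemma hadamard [IsUltrametricDist K] (hN : IsNAnorm K N) (b : Module.Basis (Fin d) K V)
    {C : ℝ} (hb : Orth N b C) (v : Fin d → V) :
    ‖b.det v‖ * ∏ j, N (b j) ≤ C ^ d * ∏ j, N (v j) := by
  rw [b.det_apply, Matrix.det_apply']
  obtain ⟨σ, -, hσ⟩ := IsUltrametricDist.exists_norm_finsetSum_le_of_nonempty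
    (Finset.univ_nonempty (α := Equiv.Perm (Fin d)))
    (fun σ => ((Equiv.Perm.sign σ : ℤ) : K) * ∏ i, b.toMatrix v (σ i) i)
  have hprod : 0 ≤ ∏ j, N (b j) := Finset.prod_nonneg fun j _ => nn hN _
  refine (mul_le_mul_of_nonneg_right hσ hprod).trans ?_
  have h1 : ‖((Equiv.Perm.sign σ : ℤ) : K) * ∏ i, b.toMatrix v (σ i) i‖ =
      ∏ i, ‖b.repr (v i) (σ i)‖ := by
    rw [norm_mul, norm_prod]
    rcases Int.units_eq_one_or (Equiv.Perm.sign σ) with h | h <;>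
      simp [h, Module.Basis.toMatrix_apply]
  rw [h1, ← Equiv.prod_comp σ (fun j => N (b j)), ← Finset.prod_mul_distrib]
  calc ∏ i, ‖b.repr (v i) (σ i)‖ * N (b (σ i)) ≤ ∏ i, C * N (v i) :=
        Finset.prod_le_prod (fun i _ => mul_nonneg (norm_nonneg _) (nn hN _))
          (fun i _ => hb _ _)
    _ = C ^ d * ∏ j, N (v j) := by rw [Finset.prod_mul_distrib]; simp

lemma exists_scaled (hN : IsNAnorm K N) (hd : 0 < d) (c : K) (v : Fin d → V) :
    ∃ w : Fin d → V, PiTensorProduct.tprod K w = c • PiTensorProduct.tprod K v ∧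
      ∏ j, N (w j) = ‖c‖ * ∏ j, N (v j) := by
  classical
  let i0 : Fin d := ⟨0, hd⟩
  refine ⟨Function.update v i0 (c • v i0), ?_, ?_⟩
  · rw [MultilinearMap.map_update_smul, Function.update_eq_self]
  · rw [← Finset.mul_prod_erase _ _ (Finset.mem_univ i0),
      ← Finset.mul_prod_erase Finset.univ (fun j => N (v j)) (Finset.mem_univ i0)]
    rw [Function.update_self, smul hN, mul_assoc]
    congr 2
    refine Finset.prod_congr rfl fun j hj => ?_
    rw [Function.update_of_ne (Finset.ne_of_mem_erase hj)]

lemma exists_rep (hN : IsNAnorm K N) (hd : 0 < d) (t : ⨂[K]^d V) :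
    ∃ (n : ℕ) (v : Fin (n + 1) → Fin d → V), t = ∑ i, PiTensorProduct.tprod K (v i) := by
  induction t using PiTensorProduct.induction_on with
  | smul_tprod c v =>
    obtain ⟨w, hw, -⟩ := exists_scaled hN hd c v
    exact ⟨0, fun _ => w, by simp [hw]⟩
  | add x y hx hy =>
    obtain ⟨n, v, rfl⟩ := hx
    obtain ⟨m, w, rfl⟩ := hy
    refine ⟨n + 1 + m, (Fin.append v w : Fin ((n + 1) + (m + 1)) → Fin d → V), ?_⟩
    have := Fin.sum_univ_add (a := n + 1) (b := m + 1)
      (fun i => PiTensorProduct.tprod K (Fin.append v w i))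
    simp only [Fin.append_left, Fin.append_right] at this
    exact this.symm

lemma det_bounds [IsUltrametricDist K] (hN : IsNAnorm K N) (hd : 0 < d)
    (b : Module.Basis (Fin d) K V) {C : ℝ} (hC : 1 < C) (hb : Orth N b C) (ω : ⋀[K]^d V) :
    (C ^ d)⁻¹ * (‖detCoord b ω‖ * ∏ j, N (b j)) ≤
        quotNorm (tensorToExteriorPower K V d) (tensorPowNorm K N d) ω ∧
      quotNorm (tensorToExteriorPower K V d) (tensorPowNorm K N d) ω ≤
        ‖detCoord b ω‖ * ∏ j, N (b j) := by
  obtain ⟨w, hw, hwN⟩ := exists_scaled hN hd (detCoord b ω) b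
  have hπ : tensorToExteriorPower K V d (PiTensorProduct.tprod K w) = ω := by
    rw [hw, map_smul, toExt_tprod, ← eq_detCoord_smul]
  have hCd : 0 < C ^ d := by positivity
  have hlow : ∀ t : ⨂[K]^d V, tensorToExteriorPower K V d t = ω →
      (C ^ d)⁻¹ * (‖detCoord b ω‖ * ∏ j, N (b j)) ≤ tensorPowNorm K N d t := by
    intro t ht
    obtain ⟨n0, v0, hv0⟩ := exists_rep hN hd t
    refine le_csInf ⟨_, n0, v0, hv0, rfl⟩ ?_
    rintro r ⟨n, v, rfl, rfl⟩
    have hsum : detCoord b ω = ∑ i, b.det (v i) := by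
      rw [← ht, map_sum, map_sum]
      simp only [toExt_tprod, detCoord_ιMulti]
    obtain ⟨i, -, hi⟩ := IsUltrametricDist.exists_norm_finsetSum_le_of_nonempty
      (Finset.univ_nonempty (α := Fin (n + 1))) (fun i => b.det (v i))
    rw [← hsum] at hi
    refine le_trans ?_ (Finset.le_sup' (fun i => ∏ j, N (v i j)) (Finset.mem_univ i))
    rw [inv_mul_le_iff₀ hCd]
    refine le_trans ?_ (hadamard hN b hb (v i))
    exact mul_le_mul_of_nonneg_right hi (Finset.prod_nonneg fun j _ => nn hN _)
  have htn : ∀ t : ⨂[K]^d V, BddBelow {r | ∃ (n : ℕ) (v : Fin (n + 1) → Fin d → V),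
    t = ∑ i, PiTensorProduct.tprod K (v i) ∧
    r = Finset.univ.sup' Finset.univ_nonempty fun i => ∏ j, N (v i j)} := by
    intro t
    refine ⟨0, ?_⟩
    rintro r ⟨n, v, -, rfl⟩
    exact le_trans (Finset.prod_nonneg fun j _ => nn hN _)
      (Finset.le_sup' (fun i => ∏ j, N (v i j)) (Finset.mem_univ 0))
  constructor
  · refine le_csInf ⟨_, _, hπ, rfl⟩ ?_
    rintro r ⟨t, ht, rfl⟩
    exact hlow t ht
  · refine csInf_le_of_le ⟨(C ^ d)⁻¹ * (‖detCoord b ω‖ * ∏ j, N (b j)), ?_⟩ ⟨_, hπ, rfl⟩ ?_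
    · rintro r ⟨t, ht, rfl⟩
      exact hlow t ht
    · refine csInf_le (htn _) ⟨0, fun _ => w, by simp, ?_⟩
      simp [hwN]

lemma det_log [IsUltrametricDist K] (hN : IsNAnorm K N) (hd : 0 < d)
    (b : Module.Basis (Fin d) K V) {C : ℝ} (hC : 1 < C) (hb : Orth N b C) (ω : ⋀[K]^d V)
    (hω : ω ≠ 0) :
    |Real.log (quotNorm (tensorToExteriorPower K V d) (tensorPowNorm K N d) ω) -
      (Real.log ‖detCoord b ω‖ + ∑ j, Real.log (N (b j)))| ≤ d * Real.log C := by
  obtain ⟨h1, h2⟩ := det_bounds hN hd b hC hb ω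
  have hc : 0 < ‖detCoord b ω‖ := by
    rw [norm_pos_iff]
    intro h
    have := eq_detCoord_smul b ω
    rw [h, zero_smul] at this
    exact hω this
  have hp : 0 < ∏ j, N (b j) := Finset.prod_pos fun j _ => pos hN (b.ne_zero j)
  have hA : 0 < ‖detCoord b ω‖ * ∏ j, N (b j) := mul_pos hc hp
  have hCd : 0 < (C ^ d)⁻¹ := by positivity
  have hlA : Real.log (‖detCoord b ω‖ * ∏ j, N (b j)) =
      Real.log ‖detCoord b ω‖ + ∑ j, Real.log (N (b j)) := by
    rw [Real.log_mul hc.ne' hp.ne', Real.log_prod (fun j _ => (pos hN (b.ne_zero j)).ne')]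
  have hq : 0 < quotNorm (tensorToExteriorPower K V d) (tensorPowNorm K N d) ω :=
    lt_of_lt_of_le (mul_pos hCd hA) h1
  have l1 := Real.log_le_log (mul_pos hCd hA) h1
  have l2 := Real.log_le_log hq h2
  rw [Real.log_mul hCd.ne' hA.ne', Real.log_inv, Real.log_pow, hlA] at l1
  rw [hlA] at l2
  have : 0 ≤ d * Real.log C := mul_nonneg (Nat.cast_nonneg _) (Real.log_nonneg hC.le)
  rw [abs_le]
  constructor <;> linarith

end det

end RelVolAux

/-- The relative volume of two norms is computed by the top exterior power norms:
`vol(N, N') = (1/d)·(log N'^{∧d}(ω) − log N^{∧d}(ω))` for any nonzero `ω ∈ Λ^d V`. -/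
theorem relVol_eq_log_det
    (K V : Type*) [NormedField K] [IsUltrametricDist K] [CompleteSpace K]
    [AddCommGroup V] [Module K V] [FiniteDimensional K V]
    (N N' : V → ℝ) (hN : IsNAnorm K N) (hN' : IsNAnorm K N') :
    ∀ ω : ⋀[K]^(Module.finrank K V) V, ω ≠ 0 →
      relVol K V N N' =
        (Module.finrank K V : ℝ)⁻¹ *
          (Real.log (quotNorm (tensorToExteriorPower K V (Module.finrank K V))
              (tensorPowNorm K N' (Module.finrank K V)) ω) -
           Real.log (quotNorm (tensorToExteriorPower K V (Module.finrank K V))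
              (tensorPowNorm K N (Module.finrank K V)) ω)) := by
  intro ω hω
  unfold relVol
  rcases Nat.eq_zero_or_pos (Module.finrank K V) with h0 | hd
  · simp [h0]
  congr 1
  set A := Real.log (quotNorm (tensorToExteriorPower K V (Module.finrank K V))
              (tensorPowNorm K N' (Module.finrank K V)) ω) with hA
  set B := Real.log (quotNorm (tensorToExteriorPower K V (Module.finrank K V))
              (tensorPowNorm K N (Module.finrank K V)) ω) with hB
  have key : ∀ C : ℝ, 1 < C →
      |∑ i ∈ Finset.range (Module.finrank K V), specVal K N N' (i + 1) - (A - B)| ≤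
        3 * Module.finrank K V * Real.log C := by
    intro C hC
    obtain ⟨b0, hb0, hb0'⟩ := RelVolAux.simul _ V N N' hN hN' rfl C hC
    obtain ⟨b, hb, hb', hanti⟩ := RelVolAux.exists_sorted b0 hb0 hb0'
    have h1 := RelVolAux.det_log hN hd b hC hb ω hω
    have h2 := RelVolAux.det_log hN' hd b hC hb' ω hω
    rw [← hB] at h1
    rw [← hA] at h2
    have h3 : |∑ i : Fin (Module.finrank K V), (specVal K N N' (i + 1) -
        (Real.log (N' (b i)) - Real.log (N (b i))))| ≤ Module.finrank K V * Real.log C := by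
      refine (Finset.abs_sum_le_sum_abs _ _).trans ?_
      refine (Finset.sum_le_sum fun i _ =>
        RelVolAux.specVal_bound hN hN' rfl b hC hb hb' hanti i).trans ?_
      simp
    rw [Finset.sum_sub_distrib, Finset.sum_sub_distrib] at h3
    rw [Finset.sum_range]
    rw [abs_le] at *
    constructor <;> linarith [h1.1, h1.2, h2.1, h2.2, h3.1, h3.2]
  have hz : |∑ i ∈ Finset.range (Module.finrank K V), specVal K N N' (i + 1) - (A - B)| ≤ 0 := by
    refine le_of_forall_pos_le_add fun ε hε => ?_
    have hdp : (0 : ℝ) < 3 * Module.finrank K V := by positivity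
    have := key (Real.exp (ε / (3 * Module.finrank K V)))
      (Real.one_lt_exp_iff.2 (div_pos hε hdp))
    rw [Real.log_exp, mul_div_cancel₀ _ hdp.ne'] at this
    linarith
  have := abs_nonpos_iff.1 hz
  linarith
end
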